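/- Let p ≥ q ≥ 1 and n = p + q. For λ = (λ₁ ≥ … ≥ λ_n) ∈ ℝⁿ and s = (s₁ ≥ … ≥ s_q ≥ 0) ∈ ℝ^q, the pair (λ, s) belongs to A(p,q) (i.e. there exists an n×n Hermitian matrix X with e(X) = λ and s(X₁₂) = s) if and only if (λ, λ*, 2·ŝ^{p,q}) ∈ Horn(n). -/

import Mathlib

open Matrix

/-- Eigenvalues of a (Hermitian) complex matrix, listed in decreasing order. -/
noncomputable def eigVec {k : ℕ} (X : Matrix (Fin k) (Fin k) ℂ) (hX : X.IsHermitian) :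
    Fin k → ℝ :=
  fun i => hX.eigenvalues (Tuple.sort hX.eigenvalues i.rev)

/-- The `i`-th (0-based) singular value of a rectangular complex matrix:
the square root of the `i`-th largest eigenvalue of `Y * Yᴴ` (and `0` for `i ≥ a`). -/
noncomputable def sval {a b : ℕ} (Y : Matrix (Fin a) (Fin b) ℂ) (i : ℕ) : ℝ :=
  if h : i < a then
    Real.sqrt (eigVec (Y * Yᴴ) (Matrix.isHermitian_mul_conjTranspose_self Y) ⟨i, h⟩)
  else 0

/-- The Horn cone `Horn(k)`. -/
def Horn (k : ℕ) : Set ((Fin k → ℝ) × (Fin k → ℝ) × (Fin k → ℝ)) :=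
  { v | ∃ (X Y : Matrix (Fin k) (Fin k) ℂ) (hX : X.IsHermitian) (hY : Y.IsHermitian),
      v.1 = eigVec X hX ∧ v.2.1 = eigVec Y hY ∧ v.2.2 = eigVec (X + Y) (hX.add hY) }

/-- The Littlewood–Richardson cone `LR(m,n)`. -/
def LRcone (m n : ℕ) : Set ((Fin (m + n) → ℝ) × (Fin m → ℝ) × (Fin n → ℝ)) :=
  { v | ∃ (M : Matrix (Fin (m + n)) (Fin (m + n)) ℂ) (hM : M.IsHermitian),
      v.1 = eigVec M hM ∧
      v.2.1 = eigVec (M.submatrix (Fin.castAdd n) (Fin.castAdd n))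
        (hM.submatrix (Fin.castAdd n)) ∧
      v.2.2 = eigVec (M.submatrix (Fin.natAdd m) (Fin.natAdd m))
        (hM.submatrix (Fin.natAdd m)) }

/-- Top-left `p × p` block. -/
def blockTL (p q : ℕ) (X : Matrix (Fin (p + q)) (Fin (p + q)) ℂ) : Matrix (Fin p) (Fin p) ℂ :=
  X.submatrix (Fin.castAdd q) (Fin.castAdd q)

/-- Top-right `p × q` block. -/
def blockTR (p q : ℕ) (X : Matrix (Fin (p + q)) (Fin (p + q)) ℂ) : Matrix (Fin p) (Fin q) ℂ :=
  X.submatrix (Fin.castAdd q) (Fin.natAdd p)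

/-- Bottom-left `q × p` block. -/
def blockBL (p q : ℕ) (X : Matrix (Fin (p + q)) (Fin (p + q)) ℂ) : Matrix (Fin q) (Fin p) ℂ :=
  X.submatrix (Fin.natAdd p) (Fin.castAdd q)

/-- Bottom-right `q × q` block. -/
def blockBR (p q : ℕ) (X : Matrix (Fin (p + q)) (Fin (p + q)) ℂ) : Matrix (Fin q) (Fin q) ℂ :=
  X.submatrix (Fin.natAdd p) (Fin.natAdd p)

/-- `λ* = (−λ_k, …, −λ_1)`. -/
def starVec {k : ℕ} (x : Fin k → ℝ) : Fin k → ℝ := fun i => -x i.rev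

/-- `ŝ^{p,q} = (s₁, …, s_q, 0, …, 0, −s_q, …, −s₁) ∈ ℝ^{p+q}` (with `p − q` middle zeros). -/
noncomputable def hatPQ (p q : ℕ) (s : Fin q → ℝ) : Fin (p + q) → ℝ :=
  fun i =>
    if h : (i : ℕ) < q then s ⟨i, h⟩
    else if h' : (i : ℕ) < p then 0
    else -s ⟨p + q - 1 - i, by have := i.isLt; omega⟩

/-- The cone `A(p,q)`: pairs `(e(X), s(X₁₂))` for `X` Hermitian of size `p+q`. -/
def coneA (p q : ℕ) : Set ((Fin (p + q) → ℝ) × (Fin q → ℝ)) :=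
  { v | ∃ (X : Matrix (Fin (p + q)) (Fin (p + q)) ℂ) (hX : X.IsHermitian),
      v.1 = eigVec X hX ∧ ∀ i : Fin q, v.2 i = sval (blockTR p q X) (i : ℕ) }

/-- The cone `S(p,q)`: triples `(s(X), s(X₁₂), s(X₂₁))`. -/
def coneS (p q : ℕ) : Set ((Fin (p + q) → ℝ) × (Fin q → ℝ) × (Fin q → ℝ)) :=
  { v | ∃ X : Matrix (Fin (p + q)) (Fin (p + q)) ℂ,
      (∀ i : Fin (p + q), v.1 i = sval X (i : ℕ)) ∧
      (∀ i : Fin q, v.2.1 i = sval (blockTR p q X) (i : ℕ)) ∧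
      (∀ i : Fin q, v.2.2 i = sval (blockBL p q X) (i : ℕ)) }

/-- The cone `T(p,q)`: triples `(s(X), s(X₁₁), s(X₂₂))`. -/
def coneT (p q : ℕ) : Set ((Fin (p + q) → ℝ) × (Fin p → ℝ) × (Fin q → ℝ)) :=
  { v | ∃ X : Matrix (Fin (p + q)) (Fin (p + q)) ℂ,
      (∀ i : Fin (p + q), v.1 i = sval X (i : ℕ)) ∧
      (∀ i : Fin p, v.2.1 i = sval (blockTL p q X) (i : ℕ)) ∧
      (∀ i : Fin q, v.2.2 i = sval (blockBR p q X) (i : ℕ)) }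

/-- `μ(A) = (a_r − r ≥ … ≥ a₂ − 2 ≥ a₁ − 1)` as a decreasing real vector, for
`A = {a₁ < … < a_r}` a subset of `[n]` (0-based indexing internally). -/
noncomputable def muVec {n r : ℕ} (A : Finset (Fin n)) (h : A.card = r) : Fin r → ℝ :=
  fun k => (((A.orderIsoOfFin h k.rev : Fin n) : ℕ) : ℝ) - ((k.rev : ℕ) : ℝ)

/-- `A^o = {ℓ + 1 − a : a ∈ A}` inside `[ℓ]`. -/
def opp {n : ℕ} (A : Finset (Fin n)) : Finset (Fin n) := A.image Fin.rev

/-- `|s|_{K ∩ [q]}` where `K ⊆ [n]`, `s ∈ ℝ^q` and `[q]` is viewed inside `[n]`. -/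
noncomputable def sumRestr {n q : ℕ} (s : Fin q → ℝ) (K : Finset (Fin n)) : ℝ :=
  ∑ i ∈ K, (if h : (i : ℕ) < q then s ⟨i, h⟩ else 0)

/-- The augmented matrix `Ŷ^{p,q} = [[0, Y], [Yᴴ, 0]]` of size `p + q`. -/
def hatM (p q : ℕ) (Y : Matrix (Fin p) (Fin q) ℂ) : Matrix (Fin (p + q)) (Fin (p + q)) ℂ :=
  Matrix.reindex finSumFinEquiv finSumFinEquiv (Matrix.fromBlocks 0 Y Yᴴ 0)

namespace MvPolynomial

variable {σ τ : Type*} [Fintype σ] [Fintype τ]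

/-- A polynomial vanishing on a neighbourhood of some point is zero. -/
theorem eq_zero_of_eventually_eval_eq_zero {P : MvPolynomial τ ℂ} {y : τ → ℂ}
    (h : ∀ᶠ z in nhds y, eval z P = 0) : P = 0 := by
  obtain ⟨ε, hε, hball⟩ := Metric.eventually_nhds_iff.1 h
  refine funext_set (fun i => Metric.ball (y i) ε) (fun i => ?_) (fun z hz => ?_)
  · exact infinite_of_mem_nhds (y i) (Metric.ball_mem_nhds _ hε)
  · rw [map_zero]
    exact hball ((dist_pi_lt_iff hε).2 fun i => hz i trivial)

/-- The non-vanishing locus of a nonzero polynomial is dense. -/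
theorem dense_eval_ne_zero {P : MvPolynomial τ ℂ} (hP : P ≠ 0) :
    Dense {y : τ → ℂ | eval y P ≠ 0} := by
  intro y
  rw [mem_closure_iff_frequently]
  intro h
  exact hP (eq_zero_of_eventually_eval_eq_zero (by simpa using h))

/-- The image of a dominant polynomial map contains the non-vanishing locus of a nonzero
polynomial. -/
theorem exists_forall_eval_ne_zero_mem_range (f : τ → MvPolynomial σ ℂ)
    (hf : Function.Injective (aeval f : MvPolynomial τ ℂ →ₐ[ℂ] MvPolynomial σ ℂ)) :
    ∃ a : MvPolynomial τ ℂ, a ≠ 0 ∧ ∀ y : τ → ℂ, eval y a ≠ 0 →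
      ∃ x : σ → ℂ, ∀ t, eval x (f t) = y t := by
  set φ : MvPolynomial τ ℂ →ₐ[ℂ] MvPolynomial σ ℂ := aeval f with hφ
  have hfp : φ.toRingHom.FinitePresentation := by
    have hcomp : φ.toRingHom.comp C = (C : ℂ →+* MvPolynomial σ ℂ) := by
      ext1 z
      simp
    refine RingHom.FinitePresentation.of_comp_finiteType (f := C) (g := φ.toRingHom) ?_ ?_
    · rw [hcomp]
      exact RingHom.finitePresentation_algebraMap.2
        (inferInstance : Algebra.FinitePresentation ℂ (MvPolynomial σ ℂ))
    · exact RingHom.finiteType_algebraMap.2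
        (inferInstance : Algebra.FiniteType ℂ (MvPolynomial τ ℂ))
  obtain ⟨S, hS⟩ := PrimeSpectrum.exists_constructibleSetData_iff.2
    (PrimeSpectrum.isConstructible_range_comap hfp)
  have hbot : (⟨⊥, Ideal.isPrime_bot⟩ : PrimeSpectrum (MvPolynomial τ ℂ)) ∈ S.toSet := by
    rw [hS]
    refine ⟨⟨⊥, Ideal.isPrime_bot⟩, ?_⟩
    ext z
    simp only [PrimeSpectrum.comap_asIdeal, Ideal.mem_comap, Ideal.mem_bot]
    exact map_eq_zero_iff φ hf
  simp only [PrimeSpectrum.ConstructibleSetData.toSet, Set.mem_iUnion] at hbot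
  obtain ⟨D, hD, hDg, hDf⟩ := hbot
  refine ⟨D.f, fun h0 => hDf (by simp [h0]), fun y hy => ?_⟩
  have hmem : (⟨RingHom.ker (eval y), RingHom.ker_isPrime _⟩ :
      PrimeSpectrum (MvPolynomial τ ℂ)) ∈ S.toSet := by
    simp only [PrimeSpectrum.ConstructibleSetData.toSet, Set.mem_iUnion]
    refine ⟨D, hD, ?_, ?_⟩
    · rw [PrimeSpectrum.mem_zeroLocus] at hDg ⊢
      intro g hg
      have : g = 0 := by simpa using hDg hg
      simp [this]
    · simpa [PrimeSpectrum.mem_zeroLocus, RingHom.mem_ker] using hy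
  rw [hS] at hmem
  obtain ⟨⟨P, hP⟩, hPc⟩ := hmem
  obtain ⟨M, hM, hPM⟩ := Ideal.exists_le_maximal P hP.ne_top
  obtain ⟨x, rfl⟩ := isMaximal_iff_eq_vanishingIdeal_singleton.1 hM
  refine ⟨x, fun t => ?_⟩
  have h1 : φ (X t - C (y t)) ∈ P := by
    have h2 : (X t - C (y t) : MvPolynomial τ ℂ) ∈
        (PrimeSpectrum.comap φ.toRingHom ⟨P, hP⟩).asIdeal := by
      rw [hPc]
      simp [RingHom.mem_ker]
    exact h2
  have h3 := (mem_vanishingIdeal_singleton_iff x _).1 (hPM h1)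
  rw [hφ] at h3
  simpa [sub_eq_zero] using h3

/-- A polynomial map whose image contains an open set has dense image. -/
theorem denseRange_of_range_mem_nhds (f : τ → MvPolynomial σ ℂ) {y : τ → ℂ}
    (h : Set.range (fun (x : σ → ℂ) t => eval x (f t)) ∈ nhds y) :
    DenseRange (fun (x : σ → ℂ) t => eval x (f t)) := by
  have hinj : Function.Injective (aeval f : MvPolynomial τ ℂ →ₐ[ℂ] MvPolynomial σ ℂ) := by
    rw [injective_iff_map_eq_zero]
    intro P hP
    refine eq_zero_of_eventually_eval_eq_zero (y := y) ?_
    filter_upwards [h]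
    rintro _ ⟨x, rfl⟩
    have : eval x (aeval f P) = 0 := by rw [hP, map_zero]
    rw [← this]
    simpa [coe_aeval_eq_eval] using (comp_aeval_apply f (aeval x : _ →ₐ[ℂ] ℂ) P).symm
  obtain ⟨a, ha, hay⟩ := exists_forall_eval_ne_zero_mem_range f hinj
  refine (dense_eval_ne_zero ha).mono fun y hy => ?_
  obtain ⟨x, hx⟩ := hay y hy
  exact ⟨x, _root_.funext hx⟩

end MvPolynomial

section FlagMap

variable {ι : Type*} [Fintype ι] [DecidableEq ι]

open Classical in
/-- Set to zero the entries `(j, k)` of a matrix with `x j < x k`. -/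
noncomputable def maskMatrix {R : Type*} [Zero R] (x : ι → ℝ) (b : Matrix ι ι R) : Matrix ι ι R :=
  Matrix.of fun j k => if x k ≤ x j then b j k else 0

/-- Projection of a matrix onto the matrices preserving the range of the projection `Q`. -/
def parabolicPart {R : Type*} [Ring R] (Q p : Matrix ι ι R) : Matrix ι ι R :=
  Q * p + (1 - Q) * p * (1 - Q)

/-- The polynomial map `(g, p, b) ↦ b Uᴴ p g`, where `b` is constrained to preserve the coordinate
flag defined by `x` and `p` to preserve the range of `Q`. -/
noncomputable def flagMap {R : Type*} [CommRing R] [Algebra ℂ R] (U Q : Matrix ι ι ℂ) (x : ι → ℝ)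
    (g p b : Matrix ι ι R) : Matrix ι ι R :=
  maskMatrix x b * Uᴴ.map (algebraMap ℂ R) * parabolicPart (Q.map (algebraMap ℂ R)) p * g

theorem parabolicPart_map {R : Type*} [CommRing R] [Algebra ℂ R] {R' : Type*} [CommRing R']
    [Algebra ℂ R'] (f : R →ₐ[ℂ] R') (Q : Matrix ι ι ℂ) (p : Matrix ι ι R) :
    (parabolicPart (Q.map (algebraMap ℂ R)) p).map f =
      parabolicPart (Q.map (algebraMap ℂ R')) (p.map f) := by
  have hC : (Q.map (algebraMap ℂ R)).map f = Q.map (algebraMap ℂ R') := by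
    ext j k
    simp
  simp only [parabolicPart, ← AlgHom.mapMatrix_apply, map_add, map_mul, map_sub, map_one]
  simp only [AlgHom.mapMatrix_apply, hC]

theorem flagMap_map {R R' : Type*} [CommRing R] [Algebra ℂ R] [CommRing R'] [Algebra ℂ R']
    (f : R →ₐ[ℂ] R') (U Q : Matrix ι ι ℂ) (x : ι → ℝ) (g p b : Matrix ι ι R) :
    (flagMap U Q x g p b).map f = flagMap U Q x (g.map f) (p.map f) (b.map f) := by
  have hmask : (maskMatrix x b).map f = maskMatrix x (b.map f) := by
    ext j k
    by_cases h : x k ≤ x j <;> simp [maskMatrix, h]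
  have hC (A : Matrix ι ι ℂ) : (A.map (algebraMap ℂ R)).map f = A.map (algebraMap ℂ R') := by
    ext j k
    simp
  simp only [flagMap, Matrix.map_mul, hmask, hC, parabolicPart_map]

theorem maskMatrix_one {ι : Type*} [DecidableEq ι] (x : ι → ℝ) : maskMatrix x (1 : Matrix ι ι ℂ) = 1 := by
  ext j k
  by_cases h : j = k
  · subst h; simp [maskMatrix]
  · simp [maskMatrix, h]

theorem parabolicPart_one {Q : Matrix ι ι ℂ} (hQ : Q * Q = Q) : parabolicPart Q 1 = 1 := by
  simp only [parabolicPart, mul_one]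
  noncomm_ring
  simp [hQ]

/-- The differential of `flagMap` at the identity. -/
noncomputable def flagMapDeriv {κ : Type*} (U : κ → Matrix ι ι ℂ) (Q : Matrix ι ι ℂ)
    (x : κ → ι → ℝ) :
    (Matrix ι ι ℂ × (κ → Matrix ι ι ℂ) × (κ → Matrix ι ι ℂ)) →ₗ[ℂ] (κ → Matrix ι ι ℂ) where
  toFun v i := maskMatrix (x i) (v.2.2 i) * (U i)ᴴ + (U i)ᴴ * parabolicPart Q (v.2.1 i) +
    (U i)ᴴ * v.1
  map_add' v w := by
    ext1 i
    have : maskMatrix (x i) (v.2.2 i + w.2.2 i) =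
        maskMatrix (x i) (v.2.2 i) + maskMatrix (x i) (w.2.2 i) := by
      ext j k
      by_cases h : x i k ≤ x i j <;> simp [maskMatrix, h]
    simp only [Prod.fst_add, Prod.snd_add, Pi.add_apply, this, parabolicPart]
    noncomm_ring
  map_smul' c v := by
    ext1 i
    have : maskMatrix (x i) (c • v.2.2 i) = c • maskMatrix (x i) (v.2.2 i) := by
      ext j k
      by_cases h : x i k ≤ x i j <;> simp [maskMatrix, h]
    simp only [Prod.smul_fst, Prod.smul_snd, Pi.smul_apply, this, parabolicPart, RingHom.id_apply,
      smul_mul_assoc, mul_smul_comm, smul_add, mul_add]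

theorem flagMapDeriv_surjective {κ : Type*} [Fintype κ] [DecidableEq κ]
    {U : κ → Matrix ι ι ℂ} {Q : Matrix ι ι ℂ} {x : κ → ι → ℝ}
    (hU : ∀ i, U i ∈ unitaryGroup ι ℂ) (hQ : Q * Q = Q)
    (hinj : ∀ z : κ → Matrix ι ι ℂ, (∀ i, z i * Q = 0) → (∀ i, Q * z i = z i) →
      (∀ i j k, x i j ≤ x i k → ((U i)ᴴ * z i * U i) j k = 0) → ∑ i, z i = 0 → ∀ i, z i = 0) :
    Function.Surjective (flagMapDeriv U Q x) := by
  rw [← LinearMap.range_eq_top]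
  by_contra hne
  obtain ⟨φ, hφ0, hφ⟩ := Submodule.exists_le_ker_of_lt_top _ (lt_top_iff_ne_top.2 hne)
  replace hφ : ∀ v, φ (flagMapDeriv U Q x v) = 0 := fun v => hφ ⟨v, rfl⟩
  set c : κ → Matrix ι ι ℂ := fun i => Matrix.of fun j k => φ (Pi.single i (single k j 1)) with hc
  have hφc (m : κ → Matrix ι ι ℂ) : φ m = ∑ i, trace (c i * m i) := by
    have hm : m = ∑ i, ∑ j, ∑ k, m i j k • Pi.single i (single j k (1 : ℂ)) := by
      conv_lhs => rw [← Finset.univ_sum_single m]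
      refine Finset.sum_congr rfl fun i _ => ?_
      conv_lhs => rw [matrix_eq_sum_single (m i)]
      have hsingle (w : ι → Matrix ι ι ℂ) :
          (Pi.single i (∑ a, w a) : κ → Matrix ι ι ℂ) = ∑ a, Pi.single i (w a) :=
        map_sum (AddMonoidHom.single (fun _ : κ => Matrix ι ι ℂ) i) w Finset.univ
      rw [hsingle]
      refine Finset.sum_congr rfl fun j _ => ?_
      rw [hsingle]
      refine Finset.sum_congr rfl fun k _ => ?_
      rw [← Pi.single_smul, smul_single, smul_eq_mul, mul_one]
    conv_lhs => rw [hm]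
    simp only [map_sum, map_smul, smul_eq_mul]
    refine Finset.sum_congr rfl fun i _ => ?_
    rw [trace_mul_comm]
    simp only [trace, diag_apply, mul_apply, hc, of_apply]
  set z : κ → Matrix ι ι ℂ := fun i => c i * (U i)ᴴ with hz
  have hUU (i) : (U i)ᴴ * U i = 1 := mem_unitaryGroup_iff'.1 (hU i)
  have hcz (i) : c i = z i * U i := by simp [hz, mul_assoc, hUU]
  have hmask0 (i) : maskMatrix (x i) (0 : Matrix ι ι ℂ) = 0 := by
    ext j k; simp [maskMatrix]
  have hpar0 : parabolicPart Q 0 = 0 := by simp [parabolicPart]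
  have htr {A : Matrix ι ι ℂ} (h : ∀ Y, trace (A * Y) = 0) : A = 0 :=
    (ext_iff_trace_mul_right (A := A) (B := 0)).2 (by simpa using h)
  have hsum : ∑ i, z i = 0 := by
    refine htr fun Y => ?_
    have := hφ (Y, 0, 0)
    rw [hφc] at this
    simpa [flagMapDeriv, hmask0, hpar0, hz, Finset.sum_mul, trace_sum, mul_assoc] using this
  have hpar (i) : z i * Q + (1 - Q) * z i * (1 - Q) = 0 := by
    refine htr fun Y => ?_
    have := hφ (0, Pi.single i Y, 0)
    rw [hφc, Finset.sum_eq_single i] at this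
    · simp only [flagMapDeriv, LinearMap.coe_mk, AddHom.coe_mk, Pi.zero_apply, hmask0, zero_mul,
        zero_add, Pi.single_eq_same, mul_zero, add_zero, ← mul_assoc, parabolicPart] at this
      rw [show c i * (U i)ᴴ = z i from rfl, mul_add, trace_add] at this
      rw [add_mul, trace_add, ← this, mul_assoc (z i), mul_assoc ((1 - Q) * z i),
        mul_assoc (1 - Q), trace_mul_comm (1 - Q)]
      simp only [mul_assoc]
    · intro j _ hj
      simp [flagMapDeriv, hmask0, hpar0, hj]
    · simp
  have hzQ (i) : z i * Q = 0 := by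
    have := congrArg (· * Q) (hpar i)
    have h0 : (1 - Q) * Q = 0 := by rw [sub_mul, hQ, one_mul, sub_self]
    simpa [add_mul, mul_assoc, h0, hQ] using this
  have hQz (i) : Q * z i = z i := by
    have := hpar i
    rw [hzQ, zero_add, mul_sub, mul_assoc _ _ Q, hzQ, mul_zero, mul_one, sub_zero, sub_mul,
      one_mul, sub_eq_zero] at this
    exact this.symm
  have hent (i j k) (hjk : x i j ≤ x i k) : ((U i)ᴴ * z i * U i) j k = 0 := by
    have := hφ (0, 0, Pi.single i (single k j 1))
    rw [hφc, Finset.sum_eq_single i] at this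
    · have hs : maskMatrix (x i) (single k j (1 : ℂ)) = single k j 1 := by
        ext a b
        simp only [maskMatrix, of_apply, single_apply]
        by_cases h : k = a ∧ j = b
        · obtain ⟨rfl, rfl⟩ := h
          simp [hjk]
        · simp [h]
      simp only [flagMapDeriv, LinearMap.coe_mk, AddHom.coe_mk, Pi.zero_apply, hpar0,
        Pi.single_eq_same, mul_zero, add_zero, hs] at this
      rw [← mul_assoc, trace_mul_comm, hcz, ← mul_assoc, ← mul_assoc] at this
      simpa [trace_mul_single] using this
    · intro j _ hj
      simp [flagMapDeriv, hmask0, hpar0, hj]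
    · simp
  have hz0 := hinj z hzQ hQz hent hsum
  refine hφ0 (LinearMap.ext fun m => ?_)
  rw [hφc]
  simp [hcz, hz0]

end FlagMap

section FlagDensity

variable {ι κ : Type*} [Fintype ι] [DecidableEq ι] [Fintype κ] [DecidableEq κ]

theorem MvPolynomial.contDiff_eval {σ : Type*} [Fintype σ] (P : MvPolynomial σ ℂ) :
    ContDiff ℂ 1 fun x : σ → ℂ => eval x P := by
  induction P using MvPolynomial.induction_on with
  | C a => simpa using contDiff_const
  | add p q hp hq => simpa using hp.add hq
  | mul_X p i hp => simpa using hp.mul (contDiff_apply ℂ ℂ i)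

open scoped Matrix.Norms.L2Operator in
theorem hasDerivAt_flagMap_line {U Q : Matrix ι ι ℂ} (hQ : Q * Q = Q) (x : ι → ℝ)
    (g p b : Matrix ι ι ℂ) (j k : ι) :
    HasDerivAt (fun s : ℂ => flagMap U Q x (1 + s • g) (1 + s • p) (1 + s • b) j k)
      ((maskMatrix x b * Uᴴ + Uᴴ * parabolicPart Q p + Uᴴ * g) j k) 0 := by
  have hline (A : Matrix ι ι ℂ) : HasDerivAt (fun s : ℂ => 1 + s • A) A 0 := by
    simpa using ((hasDerivAt_id (0 : ℂ)).smul_const A).const_add 1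
  have hmask (s : ℂ) : maskMatrix x (1 + s • b) = 1 + s • maskMatrix x b := by
    rw [← maskMatrix_one x]
    ext j k
    by_cases h : x k ≤ x j <;> simp [maskMatrix, h]
  have hpar (s : ℂ) : parabolicPart Q (1 + s • p) = 1 + s • parabolicPart Q p := by
    conv_rhs => rw [← parabolicPart_one hQ]
    simp only [parabolicPart, smul_add, mul_add, add_mul, mul_smul_comm, smul_mul_assoc]
    abel
  have hmat := (((hline (maskMatrix x b)).mul_const Uᴴ).mul (hline (parabolicPart Q p))).mul
    (hline g)
  have hent := ((entryLinearMap ℂ ℂ j k).toContinuousLinearMap.hasFDerivAt).comp_hasDerivAt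
    (0 : ℂ) hmat
  have hfun : (fun s : ℂ => flagMap U Q x (1 + s • g) (1 + s • p) (1 + s • b) j k) =
      fun s : ℂ => ((1 + s • maskMatrix x b) * Uᴴ * (1 + s • parabolicPart Q p) * (1 + s • g)) j k := by
    have hid (A : Matrix ι ι ℂ) : A.map (algebraMap ℂ ℂ) = A := Matrix.ext fun _ _ => rfl
    funext s
    rw [flagMap, hid, hid, hmask, hpar]
  rw [hfun]
  refine (hent.congr_deriv ?_)
  simp

theorem dense_flagMap {U : κ → Matrix ι ι ℂ} {Q : Matrix ι ι ℂ} {x : κ → ι → ℝ}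
    (hU : ∀ i, U i ∈ unitaryGroup ι ℂ) (hQ : Q * Q = Q)
    (hinj : ∀ z : κ → Matrix ι ι ℂ, (∀ i, z i * Q = 0) → (∀ i, Q * z i = z i) →
      (∀ i j k, x i j ≤ x i k → ((U i)ᴴ * z i * U i) j k = 0) → ∑ i, z i = 0 → ∀ i, z i = 0) :
    Dense {L : κ → Matrix ι ι ℂ | ∃ (g : Matrix ι ι ℂ) (P b : κ → Matrix ι ι ℂ),
      IsUnit g.det ∧ (∀ i, IsUnit (P i).det) ∧ (∀ i, (1 - Q) * P i * Q = 0) ∧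
      ∀ i, L i = maskMatrix (x i) (b i) * (U i)ᴴ * P i * g} := by
  let σ := (ι × ι) ⊕ (κ × ι × ι) ⊕ (κ × ι × ι)
  let G : Matrix ι ι (MvPolynomial σ ℂ) := Matrix.of fun j k => .X (.inl (j, k))
  let P : κ → Matrix ι ι (MvPolynomial σ ℂ) := fun i =>
    Matrix.of fun j k => .X (.inr (.inl (i, j, k)))
  let B : κ → Matrix ι ι (MvPolynomial σ ℂ) := fun i =>
    Matrix.of fun j k => .X (.inr (.inr (i, j, k)))
  let f : κ × ι × ι → MvPolynomial σ ℂ := fun t =>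
    flagMap (U t.1) Q (x t.1) G (P t.1) (B t.1) t.2.1 t.2.2
  let vec : Matrix ι ι ℂ × (κ → Matrix ι ι ℂ) × (κ → Matrix ι ι ℂ) → σ → ℂ := fun v =>
    Sum.elim (fun a => v.1 a.1 a.2) (Sum.elim (fun a => v.2.1 a.1 a.2.1 a.2.2)
      (fun a => v.2.2 a.1 a.2.1 a.2.2))
  have hvec_surj (y : σ → ℂ) : ∃ v, vec v = y := by
    refine ⟨⟨fun j k => y (.inl (j, k)), fun i j k => y (.inr (.inl (i, j, k))),
      fun i j k => y (.inr (.inr (i, j, k)))⟩, ?_⟩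
    ext (_ | _ | _) <;> rfl
  have hG (v) : G.map (MvPolynomial.aeval (vec v)) = v.1 := by
    ext j k; simp [G, vec]
  have hP (v i) : (P i).map (MvPolynomial.aeval (vec v)) = v.2.1 i := by
    ext j k; simp [P, vec]
  have hB (v i) : (B i).map (MvPolynomial.aeval (vec v)) = v.2.2 i := by
    ext j k; simp [B, vec]
  have hf (v) (t : κ × ι × ι) : MvPolynomial.eval (vec v) (f t) =
      flagMap (U t.1) Q (x t.1) v.1 (v.2.1 t.1) (v.2.2 t.1) t.2.1 t.2.2 := by
    have := congrFun₂ (flagMap_map (MvPolynomial.aeval (vec v)) (U t.1) Q (x t.1) G (P t.1) (B t.1))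
      t.2.1 t.2.2
    rw [hG, hP, hB] at this
    rw [← this]
    rfl
  let one : Matrix ι ι ℂ × (κ → Matrix ι ι ℂ) × (κ → Matrix ι ι ℂ) := (1, fun _ => 1, fun _ => 1)
  have hstrict := (contDiff_pi.2 fun t => (f t).contDiff_eval).contDiffAt (x := vec one)
    |>.hasStrictFDerivAt one_ne_zero
  have hsurj : (fderiv ℂ (fun (y : σ → ℂ) t => MvPolynomial.eval y (f t)) (vec one)).range = ⊤ := by
    rw [LinearMap.range_eq_top]
    intro m
    obtain ⟨v, hv⟩ := flagMapDeriv_surjective hU hQ hinj fun i => Matrix.of fun j k => m (i, j, k)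
    refine ⟨vec v, ?_⟩
    have hl : HasDerivAt (fun s : ℂ => vec one + s • vec v) (vec v) 0 := by
      simpa using ((hasDerivAt_id (0 : ℂ)).smul_const (vec v)).const_add (vec one)
    have hbase : vec one = vec one + (0 : ℂ) • vec v := by simp
    have h0 := hstrict.hasFDerivAt
    rw [hbase] at h0
    have h1 := HasFDerivAt.comp_hasDerivAt (0 : ℂ) h0 hl
    rw [← hbase] at h1
    have h2 : HasDerivAt (fun (s : ℂ) t => MvPolynomial.eval (vec one + s • vec v) (f t)) m 0 := by
      rw [hasDerivAt_pi]
      rintro ⟨i, j, k⟩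
      have h3 := hasDerivAt_flagMap_line (U := U i) hQ (x i) v.1 (v.2.1 i) (v.2.2 i) j k
      have h4 : (maskMatrix (x i) (v.2.2 i) * (U i)ᴴ + (U i)ᴴ * parabolicPart Q (v.2.1 i) +
          (U i)ᴴ * v.1) j k = m (i, j, k) := congrFun₂ (congrFun hv i) j k
      rw [h4] at h3
      refine h3.congr_of_eventuallyEq (Filter.Eventually.of_forall fun s => ?_)
      have h5 : vec one + s • vec v = vec (one + s • v) := by
        ext (_ | _ | _) <;> rfl
      simp only [h5, hf]
      rfl
    exact h1.unique h2
  have hrange := hstrict.map_nhds_eq_of_surj hsurj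
  have hdense := MvPolynomial.denseRange_of_range_mem_nhds f
    (hrange ▸ Filter.range_mem_map)
  let D : MvPolynomial σ ℂ := G.det *
    ∏ i, (parabolicPart (Q.map (algebraMap ℂ (MvPolynomial σ ℂ))) (P i)).det
  have hD (v) : MvPolynomial.eval (vec v) D = v.1.det * ∏ i, (parabolicPart Q (v.2.1 i)).det := by
    change MvPolynomial.aeval (vec v) D = _
    simp only [D, map_mul, map_prod, AlgHom.map_det, AlgHom.mapMatrix_apply, hG, parabolicPart_map, hP]
    have hid : Q.map (algebraMap ℂ ℂ) = Q := Matrix.ext fun _ _ => rfl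
    rw [hid]
  have hD0 : D ≠ 0 := by
    intro h
    have := hD one
    simp [h, one, parabolicPart_one hQ] at this
  have hd := hdense.dense_image (continuous_pi fun t => (f t).contDiff_eval.continuous)
    (MvPolynomial.dense_eval_ne_zero hD0)
  let Φ : (κ × ι × ι → ℂ) → (κ → Matrix ι ι ℂ) := fun m i => Matrix.of fun j k => m (i, j, k)
  have hΦ : Continuous Φ := by
    refine continuous_pi fun i => continuous_matrix fun j k => continuous_apply _
  have hΦs : Function.Surjective Φ := fun L => ⟨fun t => L t.1 t.2.1 t.2.2, rfl⟩
  refine (hΦs.denseRange.dense_image hΦ hd).mono ?_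
  rintro _ ⟨_, ⟨y, hy, rfl⟩, rfl⟩
  obtain ⟨v, rfl⟩ := hvec_surj y
  change MvPolynomial.eval _ D ≠ 0 at hy
  rw [hD, mul_ne_zero_iff, Finset.prod_ne_zero_iff] at hy
  refine ⟨v.1, fun i => parabolicPart Q (v.2.1 i), v.2.2, isUnit_iff_ne_zero.2 hy.1,
    fun i => isUnit_iff_ne_zero.2 (hy.2 i (Finset.mem_univ i)), fun i => ?_, fun i => ?_⟩
  · have h1 : (1 - Q) * Q = 0 := by rw [sub_mul, hQ, one_mul, sub_self]
    have h2 : (1 - Q) * parabolicPart Q (v.2.1 i) * Q =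
        ((1 - Q) * Q) * v.2.1 i * Q + (1 - Q) * ((1 - Q) * v.2.1 i * ((1 - Q) * Q)) := by
      rw [parabolicPart]; noncomm_ring
    rw [h2, h1]; simp
  · ext j k
    have hid (A : Matrix ι ι ℂ) : A.map (algebraMap ℂ ℂ) = A := Matrix.ext fun _ _ => rfl
    simp only [Φ, Matrix.of_apply, hf, flagMap, hid]

end FlagDensity

section FlagInequality

theorem Matrix.exists_mul_mem_unitaryGroup {n : ℕ} {Y : Matrix (Fin n) (Fin n) ℂ}
    (hY : IsUnit Y.det) :
    ∃ T : Matrix (Fin n) (Fin n) ℂ, IsUnit T.det ∧ T.IsUpperTriangular ∧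
      Y * T ∈ unitaryGroup (Fin n) ℂ := by
  let f : Fin n → EuclideanSpace ℂ (Fin n) := fun j => WithLp.toLp 2 fun k => Y k j
  let B := InnerProductSpace.gramSchmidtOrthonormalBasis (𝕜 := ℂ)
    (by simp : Module.finrank ℂ (EuclideanSpace ℂ (Fin n)) = Fintype.card (Fin n)) f
  let A : Matrix (Fin n) (Fin n) ℂ := Matrix.of fun k j => B j k
  let T := B.toBasis.toMatrix f
  have hT : T.IsUpperTriangular :=
    InnerProductSpace.gramSchmidtOrthonormalBasis_inv_isUpperTriangular _ f
  have hA : A ∈ unitaryGroup (Fin n) ℂ := by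
    rw [mem_unitaryGroup_iff']
    ext i j
    have := congrFun₂ ((orthonormal_iff_ite (𝕜 := ℂ)).1 B.orthonormal |> fun h => funext₂ h) i j
    simp only [PiLp.inner_apply] at this
    simp [A, Matrix.mul_apply, Matrix.one_apply, star_eq_conjTranspose, mul_comm] at this ⊢
    exact this
  have hYA : Y = A * T := by
    ext k j
    have h := congrArg (fun v : EuclideanSpace ℂ (Fin n) => v k) (B.toBasis.sum_toMatrix_smul_self f j)
    simp only [f] at h
    rw [← h]
    simp [A, T, Matrix.mul_apply, mul_comm, f]
  have hTu : IsUnit T.det := by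
    rw [hYA, det_mul] at hY
    exact isUnit_of_mul_isUnit_right hY
  refine ⟨T⁻¹, ?_, ?_, ?_⟩
  · rw [det_nonsing_inv]; simpa using hTu
  · have := T.invertibleOfIsUnitDet hTu
    exact blockTriangular_inv_of_blockTriangular hT
  · rw [hYA, mul_assoc, mul_nonsing_inv _ hTu, mul_one]
    exact hA

theorem Matrix.idempotent_mul_inv_mul {ι : Type*} [Fintype ι] [DecidableEq ι]
    {D M : Matrix ι ι ℂ} (hD : D * D = D) (hM : IsUnit M.det) (h : D * M * D = M * D) :
    D * M⁻¹ * D = M⁻¹ * D := by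
  let V : Submodule ℂ (Matrix ι ι ℂ) := LinearMap.ker (LinearMap.mulLeft ℂ D - LinearMap.id)
  have hV (A) : A ∈ V ↔ D * A = A := by simp [V, sub_eq_zero]
  have hmem (A : Matrix ι ι ℂ) (hA : A ∈ V) : LinearMap.mulLeft ℂ M A ∈ V := by
    rw [hV] at hA ⊢
    rw [LinearMap.mulLeft_apply]
    conv_rhs => rw [← hA, ← mul_assoc, ← h]
    rw [← mul_assoc, mul_assoc (D * M), hA]
  let φ : V →ₗ[ℂ] V := (LinearMap.mulLeft ℂ M).restrict hmem
  have hinj : Function.Injective φ := by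
    intro A B hAB
    have h1 : M * A.1 = M * B.1 := congrArg Subtype.val hAB
    ext1
    rw [← one_mul A.1, ← one_mul B.1, ← nonsing_inv_mul _ hM, mul_assoc, h1, mul_assoc]
  obtain ⟨A, hA⟩ := (LinearMap.injective_iff_surjective.1 hinj) ⟨D, (hV D).2 hD⟩
  have h1 : M * A.1 = D := congrArg Subtype.val hA
  have h2 : M⁻¹ * D = A.1 := by rw [← h1, ← mul_assoc, nonsing_inv_mul _ hM, one_mul]
  rw [mul_assoc, h2, (hV _).1 A.2]

theorem Matrix.isCompact_unitaryGroup {ι : Type*} [Fintype ι] [DecidableEq ι] :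
    IsCompact (unitaryGroup ι ℂ : Set (Matrix ι ι ℂ)) := by
  have hK : IsCompact (Set.univ.pi fun _ : ι => Set.univ.pi fun _ : ι =>
      Metric.closedBall (0 : ℂ) 1) :=
    isCompact_univ_pi fun _ => isCompact_univ_pi fun _ => isCompact_closedBall 0 1
  refine IsCompact.of_isClosed_subset hK ?_ ?_
  · have : (unitaryGroup ι ℂ : Set (Matrix ι ι ℂ)) = {A | Aᴴ * A = 1} := by
      ext A; exact mem_unitaryGroup_iff'
    rw [this]
    exact isClosed_eq (by fun_prop) continuous_const
  · intro A hA i _ j _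
    simpa using entry_norm_bound_of_unitary hA i j

instance Matrix.compactSpace_unitaryGroup {ι : Type*} [Fintype ι] [DecidableEq ι] :
    CompactSpace (unitaryGroup ι ℂ) :=
  isCompact_iff_compactSpace.1 isCompact_unitaryGroup

end FlagInequality

section LeadingSubspaces

/-- The diagonal projection onto the coordinates in `S`. -/
def coordProj {ι : Type*} [DecidableEq ι] (S : Finset ι) : Matrix ι ι ℂ :=
  diagonal fun j => if j ∈ S then 1 else 0

theorem coordProj_mul_self {ι : Type*} [Fintype ι] [DecidableEq ι] (S : Finset ι) :
    coordProj S * coordProj S = coordProj S := by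
  simp [coordProj, diagonal_mul_diagonal]

theorem coordProj_conjTranspose {ι : Type*} [DecidableEq ι] (S : Finset ι) :
    (coordProj S)ᴴ = coordProj S := by
  rw [coordProj, diagonal_conjTranspose]
  congr 1
  ext j
  by_cases h : j ∈ S <;> simp [h]

variable {n : ℕ} {κ : Type*}

/-- Families of matrices for which adapted orthonormal frames with a common leading subspace
exist. -/
def FlagSolvable (x : κ → Fin n → ℝ) (S : κ → Finset (Fin n))
    (L : κ → Matrix (Fin n) (Fin n) ℂ) : Prop :=
  ∃ V : κ → unitaryGroup (Fin n) ℂ,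
    (∀ i k, (V i).1 * coordProj (S i) * (V i).1ᴴ =
      (V k).1 * coordProj (S k) * (V k).1ᴴ) ∧
    ∀ i j k, j ∈ S i → x i k < x i j → (L i * (V i).1) k j = 0

theorem isClosed_flagSolvable (x : κ → Fin n → ℝ) (S : κ → Finset (Fin n)) :
    IsClosed {L | FlagSolvable x S L} := by
  let C : Set ((κ → Matrix (Fin n) (Fin n) ℂ) × (κ → unitaryGroup (Fin n) ℂ)) :=
    {w | (∀ i k, (w.2 i).1 * coordProj (S i) * (w.2 i).1ᴴ =
      (w.2 k).1 * coordProj (S k) * (w.2 k).1ᴴ) ∧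
      ∀ i j k, j ∈ S i → x i k < x i j → (w.1 i * (w.2 i).1) k j = 0}
  have hc (i : κ) : Continuous fun w : (κ → Matrix (Fin n) (Fin n) ℂ) ×
      (κ → unitaryGroup (Fin n) ℂ) => (w.2 i).1 :=
    continuous_subtype_val.comp ((continuous_apply i).comp continuous_snd)
  have hl (i : κ) : Continuous fun w : (κ → Matrix (Fin n) (Fin n) ℂ) ×
      (κ → unitaryGroup (Fin n) ℂ) => w.1 i := (continuous_apply i).comp continuous_fst
  have hC : IsClosed C := by
    refine IsClosed.and ?_ ?_
    · simp only [Set.ofPred_forall]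
      refine isClosed_iInter fun i => isClosed_iInter fun k => isClosed_eq ?_ ?_
      · exact ((hc i).matrix_mul continuous_const).matrix_mul (hc i).matrix_conjTranspose
      · exact ((hc k).matrix_mul continuous_const).matrix_mul (hc k).matrix_conjTranspose
    · simp only [Set.ofPred_forall]
      refine isClosed_iInter fun i => isClosed_iInter fun j => isClosed_iInter fun k =>
        isClosed_iInter fun _ => isClosed_iInter fun _ => isClosed_eq ?_ continuous_const
      exact ((hl i).matrix_mul (hc i)).matrix_elem k j
  have := isClosedMap_fst_of_compactSpace _ hC
  convert this using 1
  ext L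
  constructor
  · rintro ⟨V, h⟩
    exact ⟨(L, V), h, rfl⟩
  · rintro ⟨⟨L, V⟩, h, rfl⟩
    exact ⟨V, h⟩

theorem flagSolvable_of_eq {U : κ → Matrix (Fin n) (Fin n) ℂ} {Q : Matrix (Fin n) (Fin n) ℂ}
    {x : κ → Fin n → ℝ} {S : κ → Finset (Fin n)}
    (hS : ∀ i j k, j ≤ k → k ∈ S i → j ∈ S i ∧ x i k ≤ x i j)
    (hU : ∀ i, U i ∈ unitaryGroup (Fin n) ℂ) (hQ : Q * Q = Q)
    (hQU : ∀ i, Q = U i * coordProj (S i) * (U i)ᴴ)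
    {L : κ → Matrix (Fin n) (Fin n) ℂ} {g : Matrix (Fin n) (Fin n) ℂ}
    {P b : κ → Matrix (Fin n) (Fin n) ℂ} (hg : IsUnit g.det) (hP : ∀ i, IsUnit (P i).det)
    (hPQ : ∀ i, (1 - Q) * P i * Q = 0)
    (hL : ∀ i, L i = maskMatrix (x i) (b i) * (U i)ᴴ * P i * g) : FlagSolvable x S L := by
  have hUdet (i) : IsUnit (U i).det :=
    (isUnit_iff_isUnit_det _).1 (Unitary.toUnits ⟨U i, hU i⟩).isUnit
  have hUU (i) : (U i)ᴴ * U i = 1 := mem_unitaryGroup_iff'.1 (hU i)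
  have hY (i) : IsUnit (g⁻¹ * (P i)⁻¹ * U i).det := by
    rw [det_mul, det_mul, det_nonsing_inv, det_nonsing_inv]
    exact ((by simpa using hg : IsUnit (Ring.inverse g.det)).mul
      (by simpa using hP i)).mul (hUdet i)
  choose T hTu hT hV using fun i => exists_mul_mem_unitaryGroup (hY i)
  have hLV (i) : L i * (g⁻¹ * (P i)⁻¹ * U i * T i) = maskMatrix (x i) (b i) * T i := by
    calc _ = maskMatrix (x i) (b i) * ((U i)ᴴ * (P i * (g * g⁻¹) * (P i)⁻¹) * U i) * T i := by
          rw [hL]; simp only [mul_assoc]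
      _ = _ := by rw [mul_nonsing_inv _ hg, mul_one, mul_nonsing_inv _ (hP i), mul_one, hUU, mul_one]
  -- the leading subspaces coincide
  have hD (i) : coordProj (S i) * T i * coordProj (S i) = T i * coordProj (S i) := by
    ext j k
    simp only [coordProj, mul_diagonal, diagonal_mul]
    by_cases hk : k ∈ S i
    · by_cases hj : j ∈ S i
      · simp [hk, hj]
      · have : k < j := by
          by_contra! h
          exact hj (hS i j k h hk).1
        simp [hj, hk, hT i this]
    · simp [hk]
  have hDinv (i) := idempotent_mul_inv_mul (coordProj_mul_self (S i)) (hTu i) (hD i)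
  have hP' (i) : Q * P i * Q = P i * Q := by
    have := hPQ i
    rw [sub_mul, sub_mul, one_mul, sub_eq_zero] at this
    exact this.symm
  have hPinv (i) := idempotent_mul_inv_mul hQ (hP i) (hP' i)
  let V (i) := g⁻¹ * (P i)⁻¹ * U i * T i
  let R (i) := V i * coordProj (S i) * (V i)ᴴ
  let F := g⁻¹ * Q * g
  have hVinv (i) : (V i)ᴴ = (T i)⁻¹ * (U i)ᴴ * P i * g := by
    have h1 : V i * ((T i)⁻¹ * (U i)ᴴ * P i * g) = 1 := by
      calc _ = g⁻¹ * ((P i)⁻¹ * (U i * (T i * (T i)⁻¹) * (U i)ᴴ) * P i) * g := by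
            simp only [V, mul_assoc]
        _ = 1 := by
            have := mem_unitaryGroup_iff.1 (hU i)
            rw [star_eq_conjTranspose] at this
            rw [mul_nonsing_inv _ (hTu i), mul_one, this, mul_one, nonsing_inv_mul _ (hP i),
              mul_one, nonsing_inv_mul _ hg]
    have h2 : (V i)ᴴ * V i = 1 := mem_unitaryGroup_iff'.1 (hV i)
    rw [← mul_one (V i)ᴴ, ← h1, ← mul_assoc, h2, one_mul]
  have hQU1 (i) : Q * U i = U i * coordProj (S i) := by
    conv_lhs => rw [hQU i]
    rw [mul_assoc, hUU, mul_one]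
  have hQU2 (i) : (U i)ᴴ * Q = coordProj (S i) * (U i)ᴴ := by
    conv_lhs => rw [hQU i]
    rw [← mul_assoc, ← mul_assoc, hUU, one_mul]
  have hFV (i) : F * (V i * coordProj (S i)) = V i * coordProj (S i) := by
    have h1 : (P i)⁻¹ * (U i * (T i * coordProj (S i))) =
        (P i)⁻¹ * Q * (U i * (T i * coordProj (S i))) := by
      conv_lhs => rw [← hD]
      rw [mul_assoc (coordProj (S i)), ← mul_assoc (U i) (coordProj (S i)), ← hQU1]
      simp only [mul_assoc]
    calc _ = g⁻¹ * Q * (g * g⁻¹) * ((P i)⁻¹ * (U i * (T i * coordProj (S i)))) := by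
          simp only [F, V, mul_assoc]
      _ = g⁻¹ * (Q * (P i)⁻¹ * Q) * (U i * (T i * coordProj (S i))) := by
          rw [mul_nonsing_inv _ hg, mul_one, h1]
          simp only [mul_assoc]
      _ = g⁻¹ * ((P i)⁻¹ * Q * (U i * (T i * coordProj (S i)))) := by
          rw [hPinv]; simp only [mul_assoc]
      _ = _ := by rw [← h1]; simp only [V, mul_assoc]
  have hVF (i) : coordProj (S i) * (V i)ᴴ * F = (V i)ᴴ * F := by
    calc _ = coordProj (S i) * (T i)⁻¹ * (U i)ᴴ * P i * (g * g⁻¹) * Q * g := by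
          simp only [hVinv, F, mul_assoc]
      _ = coordProj (S i) * (T i)⁻¹ * (U i)ᴴ * (P i * Q) * g := by
          rw [mul_nonsing_inv _ hg, mul_one]; simp only [mul_assoc]
      _ = coordProj (S i) * (T i)⁻¹ * ((U i)ᴴ * Q) * P i * Q * g := by
          rw [← hP']; simp only [mul_assoc]
      _ = (coordProj (S i) * (T i)⁻¹ * coordProj (S i)) * (U i)ᴴ * P i * Q * g := by
          rw [hQU2]; simp only [mul_assoc]
      _ = (T i)⁻¹ * ((U i)ᴴ * Q) * P i * Q * g := by
          rw [hDinv, hQU2]; simp only [mul_assoc]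
      _ = (T i)⁻¹ * (U i)ᴴ * (P i * Q) * g := by
          rw [← hP']; simp only [mul_assoc]
      _ = (T i)⁻¹ * (U i)ᴴ * P i * (g * g⁻¹) * Q * g := by
          rw [mul_nonsing_inv _ hg, mul_one]; simp only [mul_assoc]
      _ = _ := by simp only [hVinv, F, mul_assoc]
  have hRF (i) : R i * F = F := by
    have h2 : V i * (V i)ᴴ = 1 := mem_unitaryGroup_iff.1 (hV i)
    rw [show R i * F = V i * (coordProj (S i) * (V i)ᴴ * F) by simp only [R, mul_assoc], hVF,
      ← mul_assoc, h2, one_mul]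
  have hFR (i) : F * R i = R i := by
    rw [show F * R i = F * (V i * coordProj (S i)) * (V i)ᴴ by simp only [R, mul_assoc], hFV]
  have hRR (i k) : R i * R k = R k := by
    rw [← hFR k, ← mul_assoc, hRF]
  have hRstar (i) : (R i)ᴴ = R i := by
    simp only [R, conjTranspose_mul, conjTranspose_conjTranspose, coordProj_conjTranspose, mul_assoc]
  have hReq (i k) : R i = R k := by
    have := congrArg conjTranspose (hRR i k)
    rw [conjTranspose_mul, hRstar, hRstar, hRR] at this
    exact this
  refine ⟨fun i => ⟨V i, hV i⟩, hReq, fun i j k hj hx => ?_⟩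
  change (L i * (g⁻¹ * (P i)⁻¹ * U i * T i)) k j = 0
  rw [hLV, mul_apply]
  refine Finset.sum_eq_zero fun l _ => ?_
  by_cases hlj : j < l
  · rw [hT i hlj, mul_zero]
  · have := (hS i l j (not_lt.1 hlj) hj).2
    rw [maskMatrix, of_apply, if_neg (by linarith), zero_mul]

theorem exists_sum_le_trace [Fintype κ] [DecidableEq κ] [Nonempty κ] {U : κ → Matrix (Fin n) (Fin n) ℂ}
    {Q : Matrix (Fin n) (Fin n) ℂ} {x : κ → Fin n → ℝ} {S : κ → Finset (Fin n)}
    (hS : ∀ i j k, j ≤ k → k ∈ S i → j ∈ S i ∧ x i k ≤ x i j)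
    (hU : ∀ i, U i ∈ unitaryGroup (Fin n) ℂ) (hQ : Q * Q = Q)
    (hQU : ∀ i, Q = U i * coordProj (S i) * (U i)ᴴ)
    (hinj : ∀ z : κ → Matrix (Fin n) (Fin n) ℂ, (∀ i, z i * Q = 0) → (∀ i, Q * z i = z i) →
      (∀ i j k, x i j ≤ x i k → ((U i)ᴴ * z i * U i) j k = 0) → ∑ i, z i = 0 → ∀ i, z i = 0)
    {W : κ → Matrix (Fin n) (Fin n) ℂ} (hW : ∀ i, W i ∈ unitaryGroup (Fin n) ℂ) :
    ∃ R : Matrix (Fin n) (Fin n) ℂ, ∀ i, ∑ j ∈ S i, x i j ≤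
      (R * (W i * diagonal (fun j => (x i j : ℂ)) * (W i)ᴴ)).trace.re := by
  have hall : FlagSolvable x S fun i => (W i)ᴴ := by
    have hd : Dense {L | FlagSolvable x S L} := (dense_flagMap hU hQ hinj).mono (by
      rintro L ⟨g, P, b, hg, hP, hPQ, hL⟩
      exact flagSolvable_of_eq hS hU hQ hQU hg hP hPQ hL)
    have h := (isClosed_flagSolvable x S).closure_eq
    rw [hd.closure_eq] at h
    have h' : (fun i => (W i)ᴴ) ∈ {L | FlagSolvable x S L} := h ▸ Set.mem_univ _
    exact h'
  obtain ⟨V, hVR, hV⟩ := hall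
  obtain ⟨i₀⟩ := ‹Nonempty κ›
  refine ⟨(V i₀).1 * coordProj (S i₀) * (V i₀).1ᴴ, fun i => ?_⟩
  let B := (W i)ᴴ * (V i).1
  have hB : Bᴴ * B = 1 := by
    have h1 : W i * (W i)ᴴ = 1 := mem_unitaryGroup_iff.1 (hW i)
    have h2 : (V i).1ᴴ * (V i).1 = 1 := mem_unitaryGroup_iff'.1 (V i).2
    calc _ = (V i).1ᴴ * (W i * (W i)ᴴ) * (V i).1 := by
          simp only [B, conjTranspose_mul, conjTranspose_conjTranspose, mul_assoc]
      _ = 1 := by rw [h1, mul_one, h2]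
  have htr : ((V i₀).1 * coordProj (S i₀) * (V i₀).1ᴴ *
      (W i * diagonal (fun j => (x i j : ℂ)) * (W i)ᴴ)).trace =
      (coordProj (S i) * (Bᴴ * diagonal (fun j => (x i j : ℂ)) * B)).trace := by
    rw [hVR i₀ i, mul_assoc, mul_assoc, trace_mul_comm]
    simp only [B, conjTranspose_mul, conjTranspose_conjTranspose, mul_assoc]
  have hcol (j) : ∑ k, ‖B k j‖ ^ 2 = 1 := by
    have := congrFun₂ hB j j
    simp only [mul_apply, conjTranspose_apply, one_apply_eq, RCLike.star_def,
      Complex.conj_mul'] at this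
    exact_mod_cast this
  have hval (j) : (Bᴴ * diagonal (fun j => (x i j : ℂ)) * B) j j =
      ((∑ k, x i k * ‖B k j‖ ^ 2 : ℝ) : ℂ) := by
    rw [mul_apply, Complex.ofReal_sum]
    refine Finset.sum_congr rfl fun k _ => ?_
    rw [mul_diagonal, conjTranspose_apply, mul_right_comm, RCLike.star_def, Complex.conj_mul']
    push_cast
    ring
  rw [htr]
  have htr2 : (coordProj (S i) * (Bᴴ * diagonal (fun j => (x i j : ℂ)) * B)).trace.re =
      ∑ j ∈ S i, ∑ k, x i k * ‖B k j‖ ^ 2 := by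
    rw [trace, ← Finset.sum_filter_add_sum_filter_not Finset.univ (· ∈ S i)]
    simp only [diag_apply, coordProj, diagonal_mul, hval]
    rw [Finset.sum_congr rfl (g := fun j => ((∑ k, x i k * ‖B k j‖ ^ 2 : ℝ) : ℂ)) (by
      intro j hj; simp [(Finset.mem_filter.1 hj).2])]
    rw [Finset.sum_eq_zero (s := Finset.univ.filter (· ∉ S i)) (by
      intro j hj; simp [(Finset.mem_filter.1 hj).2])]
    rw [add_zero, ← Complex.ofReal_sum, Complex.ofReal_re]
    simp
  rw [htr2]
  refine Finset.sum_le_sum fun j hj => ?_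
  rw [← mul_one (x i j), ← hcol j, Finset.mul_sum]
  refine Finset.sum_le_sum fun k _ => ?_
  by_cases hk : x i k < x i j
  · have : B k j = 0 := hV i j k hj hk
    simp [this]
  · exact mul_le_mul_of_nonneg_right (not_lt.1 hk) (sq_nonneg _)

end LeadingSubspaces

section JointDiagonalization

theorem LinearMap.IsSymmetric.exists_joint_eigenbasis {E : Type*} [NormedAddCommGroup E]
    [InnerProductSpace ℂ E] [FiniteDimensional ℂ E] {n : ℕ} (hn : Module.finrank ℂ E = n)
    {A B : E →ₗ[ℂ] E} (hA : A.IsSymmetric) (hB : B.IsSymmetric) (hAB : Commute A B) :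
    ∃ (e : OrthonormalBasis (Fin n) ℂ E) (x b : Fin n → ℝ),
      ∀ j, A (e j) = (x j : ℂ) • e j ∧ B (e j) = (b j : ℂ) • e j := by
  classical
  let F : ℂ × ℂ → Submodule ℂ E := fun i => Module.End.eigenspace A i.2 ⊓ Module.End.eigenspace B i.1
  have hF : OrthogonalFamily ℂ (fun i => F i) fun i => (F i).subtypeₗᵢ :=
    LinearMap.IsSymmetric.orthogonalFamily_eigenspace_inf_eigenspace hA hB
  let s : Set (ℂ × ℂ) := {μ | Module.End.HasEigenvalue B μ} ×ˢ {μ | Module.End.HasEigenvalue A μ}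
  have hs : s.Finite := (Module.End.finite_hasEigenvalue B).prod (Module.End.finite_hasEigenvalue A)
  have : Fintype s := hs.fintype
  let V : s → Submodule ℂ E := fun i => F i
  have hV : OrthogonalFamily ℂ (fun i => V i) fun i => (V i).subtypeₗᵢ :=
    hF.comp Subtype.val_injective
  have hVint : DirectSum.IsInternal V := by
    rw [hV.isInternal_iff, Submodule.orthogonal_eq_bot_iff, eq_top_iff,
      ← LinearMap.IsSymmetric.iSup_iSup_eigenspace_inf_eigenspace_eq_top_of_commute hA hB hAB]
    refine iSup_le fun α => iSup_le fun γ => ?_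
    by_cases hα : Module.End.HasEigenvalue A α
    · by_cases hγ : Module.End.HasEigenvalue B γ
      · exact le_iSup V ⟨(γ, α), hγ, hα⟩
      · have : Module.End.eigenspace B γ = ⊥ := not_not.1 hγ
        simp [this]
    · have : Module.End.eigenspace A α = ⊥ := not_not.1 hα
      simp [this]
  obtain ⟨e, he'⟩ : ∃ e : OrthonormalBasis (Fin n) ℂ E, ∀ j, ∃ i, e j ∈ V i :=
    ⟨hVint.subordinateOrthonormalBasis hn hV, fun j =>
      ⟨_, hVint.subordinateOrthonormalBasis_subordinate hn j hV⟩⟩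
  have he (j) : ∃ x b : ℝ, A (e j) = (x : ℂ) • e j ∧ B (e j) = (b : ℂ) • e j := by
    obtain ⟨i, h1⟩ := he' j
    have hx := hA.conj_eigenvalue_eq_self i.2.2
    have hb := hB.conj_eigenvalue_eq_self i.2.1
    rw [Complex.conj_eq_iff_real] at hx hb
    obtain ⟨x, hx⟩ := hx
    obtain ⟨b, hb⟩ := hb
    have h2 := Module.End.mem_eigenspace_iff.1 h1.1
    have h3 := Module.End.mem_eigenspace_iff.1 h1.2
    refine ⟨x, b, ?_, ?_⟩
    · rw [← hx]; exact h2
    · rw [← hb]; exact h3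
  choose x b h using he
  exact ⟨e, x, b, h⟩

theorem Matrix.IsHermitian.exists_joint_diagonalization {n : ℕ} {X β : Matrix (Fin n) (Fin n) ℂ}
    (hX : X.IsHermitian) (hβ : β.IsHermitian) (hc : Commute X β) :
    ∃ U ∈ unitaryGroup (Fin n) ℂ, ∃ x b : Fin n → ℝ,
      X * U = U * diagonal (fun j => (x j : ℂ)) ∧ β * U = U * diagonal (fun j => (b j : ℂ)) := by
  have hAB : Commute (toEuclideanLin X) (toEuclideanLin β) := by
    change toLpLin 2 2 X ∘ₗ toLpLin 2 2 β = toLpLin 2 2 β ∘ₗ toLpLin 2 2 X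
    rw [← toLpLin_mul, hc.eq, toLpLin_mul]
  obtain ⟨e, x, b, h⟩ := LinearMap.IsSymmetric.exists_joint_eigenbasis
    (by simp : Module.finrank ℂ (EuclideanSpace ℂ (Fin n)) = n)
    (isSymmetric_toEuclideanLin_iff.2 hX) (isSymmetric_toEuclideanLin_iff.2 hβ) hAB
  have hx (j) : X *ᵥ (e j).ofLp = (x j : ℂ) • (e j).ofLp := congrArg WithLp.ofLp (h j).1
  have hb (j) : β *ᵥ (e j).ofLp = (b j : ℂ) • (e j).ofLp := congrArg WithLp.ofLp (h j).2
  refine ⟨Matrix.of fun k j => e j k, ?_, x, b, ?_, ?_⟩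
  · rw [mem_unitaryGroup_iff']
    ext i j
    have := congrFun₂ ((orthonormal_iff_ite (𝕜 := ℂ)).1 e.orthonormal |> fun h => funext₂ h) i j
    simp only [PiLp.inner_apply] at this
    simp [Matrix.mul_apply, Matrix.one_apply, star_eq_conjTranspose, mul_comm] at this ⊢
    exact this
  · ext k j
    rw [mul_diagonal]
    simpa [mul_apply, mulVec, dotProduct, mul_comm] using congrFun (hx j) k
  · ext k j
    rw [mul_diagonal]
    simpa [mul_apply, mulVec, dotProduct, mul_comm] using congrFun (hb j) k

end JointDiagonalization

section PositivePart

/-- The matrices mapping joint eigenvectors of `(X, β)` to combinations of joint eigenvectors for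
which both eigenvalues are strictly larger. -/
def Raises {ι : Type*} [Fintype ι] (X β z : Matrix ι ι ℂ) : Prop :=
  ∀ (u v : ι → ℂ) (x y b c : ℝ), X *ᵥ u = (x : ℂ) • u → β *ᵥ u = (b : ℂ) • u →
    X *ᵥ v = (y : ℂ) • v → β *ᵥ v = (c : ℂ) • v → ¬ (y < x ∧ c < b) → star u ⬝ᵥ (z *ᵥ v) = 0

variable {n : ℕ}

theorem Matrix.mulVec_col {ι : Type*} [Fintype ι] [DecidableEq ι] {X U : Matrix ι ι ℂ} {x : ι → ℝ}
    (hX : X * U = U * diagonal (fun j => (x j : ℂ))) (j : ι) :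
    X *ᵥ (fun k => U k j) = (x j : ℂ) • fun k => U k j := by
  ext k
  have := congrFun₂ hX k j
  rw [mul_diagonal, mul_comm] at this
  exact this

theorem Matrix.mulVec_eq_smul_iff {ι : Type*} [Fintype ι] [DecidableEq ι] {X U : Matrix ι ι ℂ}
    {x : ι → ℝ} (hU : U ∈ unitaryGroup ι ℂ)
    (hX : X * U = U * diagonal (fun j => (x j : ℂ))) {u : ι → ℂ} {y : ℝ}
    (hu : X *ᵥ u = (y : ℂ) • u) (j : ι) (hj : (Uᴴ *ᵥ u) j ≠ 0) : x j = y := by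
  have h1 : Uᴴ * U = 1 := mem_unitaryGroup_iff'.1 hU
  have h2 : U * Uᴴ = 1 := mem_unitaryGroup_iff.1 hU
  have h3 : Uᴴ * X = diagonal (fun j => (x j : ℂ)) * Uᴴ := by
    calc Uᴴ * X = Uᴴ * (X * U) * Uᴴ := by rw [mul_assoc, mul_assoc, h2, mul_one]
      _ = _ := by rw [hX, ← mul_assoc, h1, one_mul]
  have h4 := congrArg (fun v => (Uᴴ *ᵥ v) j) hu
  simp only [mulVec_mulVec, h3, mulVec_smul] at h4
  rw [← mulVec_mulVec, mulVec_diagonal, Pi.smul_apply, smul_eq_mul] at h4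
  exact_mod_cast mul_right_cancel₀ hj h4

theorem raises_iff {ι : Type*} [Fintype ι] [DecidableEq ι] {X β U z : Matrix ι ι ℂ}
    {x b : ι → ℝ} (hU : U ∈ unitaryGroup ι ℂ)
    (hX : X * U = U * diagonal (fun j => (x j : ℂ)))
    (hβ : β * U = U * diagonal (fun j => (b j : ℂ))) :
    Raises X β z ↔ ∀ j k, ¬ (x k < x j ∧ b k < b j) → (Uᴴ * z * U) j k = 0 := by
  constructor
  · intro h j k hjk
    have := h (fun i => U i j) (fun i => U i k) (x j) (x k) (b j) (b k) (mulVec_col hX j)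
      (mulVec_col hβ j) (mulVec_col hX k) (mulVec_col hβ k) hjk
    rw [mul_assoc]
    exact this
  · intro h u v y y' c c' hu hu' hv hv' hlt
    have h2 : U * Uᴴ = 1 := mem_unitaryGroup_iff.1 hU
    have h3 : star u ⬝ᵥ (z *ᵥ v) = star (Uᴴ *ᵥ u) ⬝ᵥ ((Uᴴ * z * U) *ᵥ (Uᴴ *ᵥ v)) := by
      rw [star_mulVec, ← dotProduct_mulVec, mulVec_mulVec, mulVec_mulVec,
        conjTranspose_conjTranspose]
      rw [show U * (Uᴴ * z * U) * Uᴴ = (U * Uᴴ) * z * (U * Uᴴ) by simp only [mul_assoc], h2, one_mul,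
        mul_one]
    rw [h3, dotProduct]
    refine Finset.sum_eq_zero fun j _ => ?_
    rw [mulVec, dotProduct, Finset.mul_sum]
    refine Finset.sum_eq_zero fun k _ => ?_
    by_cases hj : (Uᴴ *ᵥ u) j = 0
    · simp [hj]
    by_cases hk : (Uᴴ *ᵥ v) k = 0
    · simp [hk]
    rw [h j k, zero_mul, mul_zero]
    rwa [mulVec_eq_smul_iff hU hX hu j hj, mulVec_eq_smul_iff hU hX hv k hk,
      mulVec_eq_smul_iff hU hβ hu' j hj, mulVec_eq_smul_iff hU hβ hv' k hk]

theorem Matrix.IsHermitian.exists_sorted_joint_diagonalization {X β : Matrix (Fin n) (Fin n) ℂ}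
    (hX : X.IsHermitian) (hβ : β.IsHermitian) (hc : Commute X β) :
    ∃ U ∈ unitaryGroup (Fin n) ℂ, ∃ x b : Fin n → ℝ,
      X * U = U * diagonal (fun j => (x j : ℂ)) ∧ β * U = U * diagonal (fun j => (b j : ℂ)) ∧
      ∀ j k, j ≤ k → 0 < b k → 0 < b j ∧ x k ≤ x j := by
  obtain ⟨U, hU, x, b, h1, h2⟩ := hX.exists_joint_diagonalization hβ hc
  let key : Fin n → ℕ ×ₗ ℝ := fun j => toLex (if 0 < b j then 0 else 1, -x j)
  let σ := Tuple.sort key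
  refine ⟨U.submatrix id σ, ?_, x ∘ σ, b ∘ σ, ?_, ?_, ?_⟩
  · rw [mem_unitaryGroup_iff', star_eq_conjTranspose, conjTranspose_submatrix,
      ← submatrix_mul Uᴴ U σ id σ Function.bijective_id]
    have := mem_unitaryGroup_iff'.1 hU
    rw [star_eq_conjTranspose] at this
    rw [this]
    exact submatrix_one_equiv σ
  · ext k j
    have := congrFun₂ h1 k (σ j)
    rw [mul_diagonal] at this ⊢
    exact this
  · ext k j
    have := congrFun₂ h2 k (σ j)
    rw [mul_diagonal] at this ⊢
    exact this
  · intro j k hjk hk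
    have := Tuple.monotone_sort key hjk
    simp only [Function.comp_apply, key, Prod.Lex.toLex_le_toLex] at this hk
    change (ite (0 < b (σ j)) 0 1 < ite (0 < b (σ k)) 0 1 ∨ _) at this
    rw [if_pos hk] at this
    by_cases hj : 0 < b (σ j)
    · rw [if_pos hj] at this
      simp only [lt_irrefl, false_or, true_and, neg_le_neg_iff] at this
      exact ⟨hj, this⟩
    · rw [if_neg hj] at this
      simp at this

theorem coordProj_conj_eq {β U U' : Matrix (Fin n) (Fin n) ℂ} {b b' : Fin n → ℝ}
    (hU : U ∈ unitaryGroup (Fin n) ℂ) (hU' : U' ∈ unitaryGroup (Fin n) ℂ)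
    (hβ : β * U = U * diagonal (fun j => (b j : ℂ)))
    (hβ' : β * U' = U' * diagonal (fun j => (b' j : ℂ))) :
    U * coordProj {j | 0 < b j} * Uᴴ = U' * coordProj {j | 0 < b' j} * U'ᴴ := by
  have h2 : U * Uᴴ = 1 := mem_unitaryGroup_iff.1 hU
  have h2' : U' * U'ᴴ = 1 := mem_unitaryGroup_iff.1 hU'
  have hW : coordProj {j | 0 < b j} * (Uᴴ * U') = (Uᴴ * U') * coordProj {j | 0 < b' j} := by
    ext j k
    rw [coordProj, coordProj, diagonal_mul, mul_diagonal]
    by_cases h : (Uᴴ * U') j k = 0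
    · simp [h]
    · have : b j = b' k := mulVec_eq_smul_iff hU hβ (mulVec_col hβ' k) j h
      simp [this, mul_comm]
  calc U * coordProj {j | 0 < b j} * Uᴴ
      = U * (coordProj {j | 0 < b j} * (Uᴴ * U')) * U'ᴴ := by
        rw [← mul_assoc, ← mul_assoc, mul_assoc _ U', h2', mul_one]
    _ = _ := by rw [hW, ← mul_assoc, ← mul_assoc, h2, one_mul]

theorem sum_unitary_conj_ne_zero {κ : Type*} [Fintype κ] [DecidableEq κ] [Nonempty κ]
    {X w : κ → Matrix (Fin n) (Fin n) ℂ} {β : Matrix (Fin n) (Fin n) ℂ}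
    (hX : ∀ i, (X i).IsHermitian) (hβ : β.IsHermitian) (hc : ∀ i, Commute (X i) β)
    (hsum : ∑ i, X i = β) {v : Fin n → ℂ} (hv : v ≠ 0) {c : ℝ} (hc0 : 0 < c)
    (hβv : β *ᵥ v = (c : ℂ) • v)
    (hinj : ∀ z : κ → Matrix (Fin n) (Fin n) ℂ, (∀ i, Raises (X i) β (z i)) → ∑ i, z i = 0 →
      ∀ i, z i = 0)
    (hw : ∀ i, w i ∈ unitaryGroup (Fin n) ℂ) : ∑ i, w i * X i * (w i)ᴴ ≠ 0 := by
  intro h0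
  choose U hU x b hXU hβU hS using fun i => (hX i).exists_sorted_joint_diagonalization hβ (hc i)
  have i₀ : κ := Classical.arbitrary κ
  let S : κ → Finset (Fin n) := fun i => {j | 0 < b i j}
  have hS_mem (i j) : j ∈ S i ↔ 0 < b i j := by simp [S]
  let Q := U i₀ * coordProj (S i₀) * (U i₀)ᴴ
  have hUU (i) : (U i)ᴴ * U i = 1 := mem_unitaryGroup_iff'.1 (hU i)
  have hUU' (i) : U i * (U i)ᴴ = 1 := mem_unitaryGroup_iff.1 (hU i)
  have hQU (i) : Q = U i * coordProj (S i) * (U i)ᴴ :=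
    coordProj_conj_eq (hU i₀) (hU i) (hβU i₀) (hβU i)
  have hQU1 (i) : Q * U i = U i * coordProj (S i) := by
    rw [hQU i, mul_assoc, hUU, mul_one]
  have hQU2 (i) : (U i)ᴴ * Q = coordProj (S i) * (U i)ᴴ := by
    rw [hQU i, ← mul_assoc, ← mul_assoc, hUU, one_mul]
  have hQ : Q * Q = Q := by
    conv_lhs => rw [hQU i₀]
    rw [mul_assoc, hQU2, mul_assoc, ← mul_assoc (coordProj _), coordProj_mul_self, ← mul_assoc,
      ← hQU]
  have hXeq (i) : X i = U i * diagonal (fun j => (x i j : ℂ)) * (U i)ᴴ := by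
    rw [← hXU, mul_assoc, hUU', mul_one]
  have hβeq (i) : β = U i * diagonal (fun j => (b i j : ℂ)) * (U i)ᴴ := by
    rw [← hβU, mul_assoc, hUU', mul_one]
  obtain ⟨R, hR⟩ := exists_sum_le_trace (κ := κ) (U := U) (Q := Q) (x := x) (S := S)
    (W := fun i => w i * U i)
    (fun i j k hjk hk => by
      rw [hS_mem] at hk ⊢
      exact hS i j k hjk hk)
    hU hQ hQU
    (fun z hz1 hz2 hz3 hz4 => hinj z (fun i => by
      rw [raises_iff (hU i) (hXU i) (hβU i)]
      intro j k hjk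
      by_cases hx : x i j ≤ x i k
      · exact hz3 i j k hx
      by_cases hk : k ∈ S i
      · have h1 : z i * U i * coordProj (S i) = 0 := by
          rw [mul_assoc, ← hQU1, ← mul_assoc, hz1, zero_mul]
        have h3 : (U i)ᴴ * z i * U i * coordProj (S i) = 0 := by
          rw [mul_assoc, mul_assoc, ← mul_assoc (z i), h1, mul_zero]
        have h2 := congrFun₂ h3 j k
        rw [coordProj, mul_diagonal, if_pos hk, mul_one] at h2
        exact h2
      · have hj : j ∉ S i := by
          rw [hS_mem] at hk ⊢
          push Not at hjk hk hx ⊢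
          exact (hjk hx).trans hk
        have h1 : coordProj (S i) * ((U i)ᴴ * z i * U i) = (U i)ᴴ * z i * U i := by
          conv_rhs => rw [← hz2 i, ← mul_assoc, hQU2]
          simp only [mul_assoc]
        rw [← h1, coordProj, diagonal_mul, if_neg hj, zero_mul]) hz4)
    (fun i => mul_mem (hw i) (hU i))
  have hle : ∑ i, ∑ j ∈ S i, x i j ≤ 0 := by
    refine (Finset.sum_le_sum fun i _ => hR i).trans_eq ?_
    rw [← Complex.re_sum, ← trace_sum, ← Finset.mul_sum]
    have : ∑ i, w i * U i * diagonal (fun j => (x i j : ℂ)) * (w i * U i)ᴴ = 0 := by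
      rw [← h0]
      refine Finset.sum_congr rfl fun i _ => ?_
      conv_rhs => rw [hXeq i]
      simp only [conjTranspose_mul, mul_assoc]
    rw [this]
    simp
  have htr (i : κ) (y : Fin n → ℝ) :
      ((Q * (U i * diagonal (fun j => (y j : ℂ)) * (U i)ᴴ)).trace).re = ∑ j ∈ S i, y j := by
    rw [← mul_assoc, ← mul_assoc, hQU1, trace_mul_comm, ← mul_assoc, ← mul_assoc, hUU, one_mul,
      coordProj, diagonal_mul_diagonal, trace_diagonal]
    simp [Finset.sum_ite_mem]
  have heq : ∑ i, ∑ j ∈ S i, x i j = ∑ j ∈ S i₀, b i₀ j := by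
    rw [← htr i₀, ← hβeq, ← hsum, Finset.mul_sum, trace_sum, Complex.re_sum]
    refine Finset.sum_congr rfl fun i _ => ?_
    rw [hXeq i, htr]
  have hpos : 0 < ∑ j ∈ S i₀, b i₀ j := by
    refine Finset.sum_pos (fun j hj => (hS_mem _ _).1 hj) ?_
    by_contra hne
    rw [Finset.not_nonempty_iff_eq_empty] at hne
    have hz : (U i₀)ᴴ *ᵥ v = 0 := by
      ext j
      by_contra hj
      have h1 := mulVec_eq_smul_iff (hU i₀) (hβU i₀) hβv j hj
      have h2 : j ∈ S i₀ := (hS_mem _ _).2 (h1 ▸ hc0)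
      simp [hne] at h2
    apply hv
    rw [← one_mulVec v, ← hUU' i₀, ← mulVec_mulVec, hz, mulVec_zero]
  linarith

end PositivePart

section Variation

theorem Raises.exists_skew {n : ℕ} {X β z : Matrix (Fin n) (Fin n) ℂ} (hX : X.IsHermitian)
    (hβ : β.IsHermitian) (hc : Commute X β) (hz : Raises X β z) :
    ∃ ξ : Matrix (Fin n) (Fin n) ℂ, ξᴴ = -ξ ∧ ξ * X - X * ξ = z + zᴴ ∧
      ((β * ξ - ξ * β) * (z + zᴴ)).trace.re ≤ 0 ∧
      (z ≠ 0 → ((β * ξ - ξ * β) * (z + zᴴ)).trace.re < 0) := by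
  obtain ⟨U, hU, x, b, hXU, hβU⟩ := hX.exists_joint_diagonalization hβ hc
  have hUU : Uᴴ * U = 1 := mem_unitaryGroup_iff'.1 hU
  have hUU' : U * Uᴴ = 1 := mem_unitaryGroup_iff.1 hU
  rw [raises_iff hU hXU hβU] at hz
  have hXeq : X = U * diagonal (fun j => (x j : ℂ)) * Uᴴ := by
    rw [← hXU, mul_assoc, hUU', mul_one]
  have hβeq : β = U * diagonal (fun j => (b j : ℂ)) * Uᴴ := by
    rw [← hβU, mul_assoc, hUU', mul_one]
  set Z := Uᴴ * z * U with hZ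
  have hzZ : z = U * Z * Uᴴ := by
    rw [hZ, show U * (Uᴴ * z * U) * Uᴴ = (U * Uᴴ) * z * (U * Uᴴ) by simp only [mul_assoc], hUU',
      one_mul, mul_one]
  let H := Z + Zᴴ
  have hH : z + zᴴ = U * H * Uᴴ := by
    rw [hzZ]
    simp only [H, conjTranspose_mul, conjTranspose_conjTranspose, mul_add, add_mul, mul_assoc]
  have hH0 (j k) (h : H j k ≠ 0) : (x k < x j ∧ b k < b j) ∨ (x j < x k ∧ b j < b k) := by
    by_contra hcon
    rw [not_or] at hcon
    apply h
    simp [H, hz j k hcon.1, hz k j hcon.2]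
  have hHs (j k) : star (H k j) = H j k := by
    simp [H, add_comm]
  let Ξ : Matrix (Fin n) (Fin n) ℂ := Matrix.of fun j k => H j k / ((x k - x j : ℝ) : ℂ)
  have hΞ (j k) : Ξ j k = H j k / ((x k - x j : ℝ) : ℂ) := rfl
  have hconj (A B : Matrix (Fin n) (Fin n) ℂ) : U * A * Uᴴ * (U * B * Uᴴ) = U * (A * B) * Uᴴ := by
    rw [show U * A * Uᴴ * (U * B * Uᴴ) = U * A * (Uᴴ * U) * B * Uᴴ by simp only [mul_assoc], hUU,
      mul_one]
    simp only [mul_assoc]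
  have htrace : ((β * (U * Ξ * Uᴴ) - U * Ξ * Uᴴ * β) * (z + zᴴ)).trace.re =
      ∑ j, ∑ k, (b j - b k) / (x k - x j) * Complex.normSq (H j k) := by
    rw [hβeq, hH, hconj, hconj, ← sub_mul, ← mul_sub, hconj, trace_mul_comm, ← mul_assoc, hUU,
      one_mul, trace, Complex.re_sum]
    refine Finset.sum_congr rfl fun j _ => ?_
    rw [diag_apply, mul_apply, Complex.re_sum]
    refine Finset.sum_congr rfl fun k _ => ?_
    rw [Matrix.sub_apply, diagonal_mul, mul_diagonal, hΞ]
    have h1 : H j k * H k j = (Complex.normSq (H j k) : ℂ) := by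
      rw [← hHs k j, RCLike.star_def, Complex.mul_conj]
    rw [show ((b j : ℂ) * (H j k / ((x k - x j : ℝ) : ℂ)) - H j k / ((x k - x j : ℝ) : ℂ) * b k) *
      H k j = ((((b j - b k) / (x k - x j) : ℝ)) : ℂ) * (H j k * H k j) by push_cast; ring, h1,
      ← Complex.ofReal_mul, Complex.ofReal_re]
  have hterm (j k) : (b j - b k) / (x k - x j) * Complex.normSq (H j k) ≤ 0 := by
    by_cases h : H j k = 0
    · simp [h]
    · refine mul_nonpos_of_nonpos_of_nonneg ?_ (Complex.normSq_nonneg _)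
      rcases hH0 j k h with ⟨h1, h2⟩ | ⟨h1, h2⟩
      · exact (div_neg_of_pos_of_neg (by linarith) (by linarith)).le
      · exact (div_neg_of_neg_of_pos (by linarith) (by linarith)).le
  refine ⟨U * Ξ * Uᴴ, ?_, ?_, ?_, fun hz0 => ?_⟩
  · have : Ξᴴ = -Ξ := by
      ext j k
      rw [conjTranspose_apply, Matrix.neg_apply, hΞ, hΞ, star_div₀, hHs, RCLike.star_def,
        Complex.conj_ofReal, ← neg_sub (x k), Complex.ofReal_neg, div_neg]
    simp only [conjTranspose_mul, conjTranspose_conjTranspose, this, mul_assoc, neg_mul, mul_neg]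
  · rw [hXeq, hconj, hconj, ← sub_mul, ← mul_sub, hH]
    congr 2
    ext j k
    rw [Matrix.sub_apply, mul_diagonal, diagonal_mul, hΞ]
    by_cases h : H j k = 0
    · simp [h]
    · have : x k - x j ≠ 0 := by
        rcases hH0 j k h with ⟨h1, h2⟩ | ⟨h1, h2⟩ <;> intro h3 <;> linarith
      have h4 : ((x k - x j : ℝ) : ℂ) ≠ 0 := by exact_mod_cast this
      rw [mul_comm, ← sub_mul, ← Complex.ofReal_sub]
      field_simp
  · rw [htrace]
    exact Finset.sum_nonpos fun j _ => Finset.sum_nonpos fun k _ => hterm j k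
  · rw [htrace]
    obtain ⟨j, k, hjk⟩ : ∃ j k, Z j k ≠ 0 := by
      by_contra! hcon
      apply hz0
      rw [hzZ, show Z = 0 from Matrix.ext hcon]
      simp
    have h1 : x k < x j ∧ b k < b j := by
      by_contra h
      exact hjk (hz j k h)
    have h2 : H j k ≠ 0 := by
      have : Z k j = 0 := hz k j (fun h => by linarith [h.1, h1.1])
      simpa [H, this] using hjk
    refine Finset.sum_neg' (fun i _ => Finset.sum_nonpos fun l _ => hterm i l)
      ⟨j, Finset.mem_univ j, Finset.sum_neg' (fun l _ => hterm j l) ⟨k, Finset.mem_univ k, ?_⟩⟩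
    exact mul_neg_of_neg_of_pos (div_neg_of_pos_of_neg (by linarith [h1.2]) (by linarith [h1.1]))
      (Complex.normSq_pos.2 h2)

open scoped Matrix.Norms.L2Operator in
theorem Matrix.hasDerivAt_exp_conj {ι : Type*} [Fintype ι] [DecidableEq ι] (ξ X : Matrix ι ι ℂ)
    (t : ℝ) :
    HasDerivAt (fun t : ℝ => NormedSpace.exp (t • ξ) * X * NormedSpace.exp (t • (-ξ)))
      (ξ * (NormedSpace.exp (t • ξ) * X * NormedSpace.exp (t • (-ξ))) -
        NormedSpace.exp (t • ξ) * X * NormedSpace.exp (t • (-ξ)) * ξ) t := by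
  have h1 := hasDerivAt_exp_smul_const' (𝕂 := ℝ) ξ t
  have h2 := hasDerivAt_exp_smul_const (𝕂 := ℝ) (-ξ) t
  refine ((h1.mul_const X).mul h2).congr_deriv ?_
  simp only [mul_neg, mul_assoc, sub_eq_add_neg]

end Variation

section CriticalPoint

theorem deriv_deriv_nonneg_of_isMin {F F' : ℝ → ℝ} {F'' : ℝ} (hF : ∀ t, HasDerivAt F (F' t) t)
    (hF' : HasDerivAt F' F'' 0) (hmin : ∀ t, F 0 ≤ F t) : F' 0 = 0 ∧ 0 ≤ F'' := by
  have h0 : F' 0 = 0 :=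
    IsLocalMin.hasDerivAt_eq_zero (Filter.Eventually.of_forall hmin) (hF 0)
  refine ⟨h0, ?_⟩
  by_contra! hneg
  have hd : deriv F = F' := funext fun t => (hF t).deriv
  have hmax : IsLocalMax F 0 := by
    refine isLocalMax_of_deriv_deriv_neg ?_ ?_ (hF 0).continuousAt
    · rw [hd, hF'.deriv]; exact hneg
    · rw [hd, h0]
  have hconst : F =ᶠ[nhds 0] fun _ => F 0 := by
    filter_upwards [hmax] with t ht
    exact le_antisymm ht (hmin t)
  have h1 : F' =ᶠ[nhds 0] fun _ => 0 := by
    have := hconst.deriv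
    rw [hd] at this
    simpa using this
  have h2 := h1.deriv_eq
  rw [hF'.deriv] at h2
  simp at h2
  linarith

variable {ι κ : Type*} [Fintype ι] [DecidableEq ι] [Fintype κ]

open scoped Matrix.Norms.L2Operator in
theorem Matrix.hasDerivAt_trace_re {M : ℝ → Matrix ι ι ℂ} {M' : Matrix ι ι ℂ} {t : ℝ}
    (h : HasDerivAt M M' t) : HasDerivAt (fun t => (M t).trace.re) M'.trace.re t := by
  let ℓ : Matrix ι ι ℂ →ₗ[ℝ] ℝ := Complex.reLm ∘ₗ traceLinearMap ι ℝ ℂ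
  exact (LinearMap.toContinuousLinearMap ℓ).hasFDerivAt.comp_hasDerivAt t h

open scoped Matrix.Norms.L2Operator in
theorem first_second_variation (X ξ : κ → Matrix ι ι ℂ)
    (hmin : ∀ t : ℝ, ((∑ i, X i) * ∑ i, X i).trace.re ≤
      ((∑ i, NormedSpace.exp (t • ξ i) * X i * NormedSpace.exp (t • (-ξ i))) *
        ∑ i, NormedSpace.exp (t • ξ i) * X i * NormedSpace.exp (t • (-ξ i))).trace.re) :
    ((∑ i, X i) * ∑ i, (ξ i * X i - X i * ξ i)).trace.re = 0 ∧
      (∑ i, (ξ i * X i - X i * ξ i) = 0 → 0 ≤ ((∑ i, X i) * ∑ i,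
        (ξ i * (ξ i * X i - X i * ξ i) - (ξ i * X i - X i * ξ i) * ξ i)).trace.re) := by
  set A : κ → ℝ → Matrix ι ι ℂ := fun i t =>
    NormedSpace.exp (t • ξ i) * X i * NormedSpace.exp (t • (-ξ i)) with hA
  have hA0 (i) : A i 0 = X i := by simp [hA]
  have dA (i) (t) : HasDerivAt (A i) (ξ i * A i t - A i t * ξ i) t := hasDerivAt_exp_conj _ _ _
  have dA' (i) (t) : HasDerivAt (fun t => ξ i * A i t - A i t * ξ i)
      (ξ i * (ξ i * A i t - A i t * ξ i) - (ξ i * A i t - A i t * ξ i) * ξ i) t :=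
    ((dA i t).const_mul _).sub ((dA i t).mul_const _)
  set Φ : ℝ → Matrix ι ι ℂ := fun t => ∑ i, A i t with hΦ
  set Φ₁ : ℝ → Matrix ι ι ℂ := fun t => ∑ i, (ξ i * A i t - A i t * ξ i) with hΦ₁
  set Φ₂ : ℝ → Matrix ι ι ℂ := fun t =>
    ∑ i, (ξ i * (ξ i * A i t - A i t * ξ i) - (ξ i * A i t - A i t * ξ i) * ξ i) with hΦ₂
  have dΦ (t) : HasDerivAt Φ (Φ₁ t) t := HasDerivAt.fun_sum fun i _ => dA i t
  have dΦ₁ (t) : HasDerivAt Φ₁ (Φ₂ t) t := HasDerivAt.fun_sum fun i _ => dA' i t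
  have dF (t) := hasDerivAt_trace_re ((dΦ t).mul (dΦ t))
  have dF' := hasDerivAt_trace_re (((dΦ₁ 0).mul (dΦ 0)).add ((dΦ 0).mul (dΦ₁ 0)))
  have hΦ0 : Φ 0 = ∑ i, X i := by simp [hΦ, hA0]
  have key := deriv_deriv_nonneg_of_isMin dF dF' (fun t => by
    change (Φ 0 * Φ 0).trace.re ≤ _
    rw [hΦ0]
    exact hmin t)
  have e1 : Φ₁ 0 = ∑ i, (ξ i * X i - X i * ξ i) := by simp only [hΦ₁, hA0]
  have e2 : Φ₂ 0 = ∑ i, (ξ i * (ξ i * X i - X i * ξ i) - (ξ i * X i - X i * ξ i) * ξ i) := by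
    simp only [hΦ₂, hA0]
  rw [← e1, ← e2, ← hΦ0]
  obtain ⟨k1, k2⟩ := key
  rw [trace_add, trace_mul_comm (Φ₁ 0), Complex.add_re] at k1
  refine ⟨by linarith, fun h => ?_⟩
  rw [h] at k2
  simp only [trace_add, trace_mul_comm (Φ₂ 0), Complex.add_re, mul_zero, trace_zero,
    Complex.zero_re] at k2
  linarith

end CriticalPoint

section Minimizer

variable {n : ℕ} {κ : Type*} [Fintype κ] {J : Matrix (Fin n) (Fin n) ℂ}

theorem Matrix.conj_mul_conj {ι : Type*} [Fintype ι] [DecidableEq ι] {J : Matrix ι ι ℂ}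
    (hJ : J * J = 1) (A B : Matrix ι ι ℂ) : J * (A * B) * J = (J * A * J) * (J * B * J) := by
  rw [show J * A * J * (J * B * J) = J * A * (J * J) * (B * J) by simp only [mul_assoc], hJ,
    mul_one]
  simp only [mul_assoc]

theorem Matrix.trace_mul_commutator {ι : Type*} [Fintype ι] (β ξ X : Matrix ι ι ℂ) :
    (β * (ξ * X - X * ξ)).trace = (ξ * (X * β - β * X)).trace := by
  rw [mul_sub, mul_sub, trace_sub, trace_sub, trace_mul_comm β, ← mul_assoc β, trace_mul_comm _ ξ,
    mul_assoc]

theorem Matrix.trace_mul_commutator' {ι : Type*} [Fintype ι] (β ξ H : Matrix ι ι ℂ) :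
    (β * (ξ * H - H * ξ)).trace = ((β * ξ - ξ * β) * H).trace := by
  rw [mul_sub, sub_mul, trace_sub, trace_sub, ← mul_assoc, ← mul_assoc β, trace_mul_comm _ ξ,
    mul_assoc ξ]

theorem Raises.neg_conj {X Y β z : Matrix (Fin n) (Fin n) ℂ} (hJ : J * J = 1) (hJs : Jᴴ = J)
    (hX : J * Y * J = -X) (hβ : J * β * J = -β) (hz : Raises Y β z) :
    Raises X β (J * zᴴ * J) := by
  have key {M N : Matrix (Fin n) (Fin n) ℂ} (h : J * N * J = -M) {u : Fin n → ℂ} {x : ℝ}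
      (hu : M *ᵥ u = (x : ℂ) • u) : N *ᵥ (J *ᵥ u) = ((-x : ℝ) : ℂ) • (J *ᵥ u) := by
    have h1 : N * J = -(J * M) := by
      rw [← mul_neg, ← h, ← mul_assoc, ← mul_assoc, hJ, one_mul]
    rw [mulVec_mulVec, h1, neg_mulVec, ← mulVec_mulVec, hu, mulVec_smul, Complex.ofReal_neg,
      neg_smul]
  intro u v x y b c hu hbu hv hbv hn
  have h := hz (J *ᵥ v) (J *ᵥ u) (-y) (-x) (-c) (-b) (key hX hv) (key hβ hbv) (key hX hu)
    (key hβ hbu) (fun h => hn ⟨by linarith [h.1], by linarith [h.2]⟩)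
  have h2 := congrArg star h
  rw [star_zero, ← star_dotProduct_star, star_star, star_mulVec, star_mulVec, hJs] at h2
  rw [← h2]
  simp only [dotProduct_mulVec, vecMul_vecMul, mul_assoc]

theorem Raises.sub {X β z w : Matrix (Fin n) (Fin n) ℂ} (hz : Raises X β z) (hw : Raises X β w) :
    Raises X β (z - w) := by
  intro u v x y b c hu hbu hv hbv hn
  rw [sub_mulVec, dotProduct_sub, hz u v x y b c hu hbu hv hbv hn,
    hw u v x y b c hu hbu hv hbv hn, sub_zero]

theorem Raises.smul {X β z : Matrix (Fin n) (Fin n) ℂ} (a : ℂ) (hz : Raises X β z) :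
    Raises X β (a • z) := by
  intro u v x y b c hu hbu hv hbv hn
  rw [smul_mulVec, dotProduct_smul, hz u v x y b c hu hbu hv hbv hn, smul_zero]

open scoped ComplexOrder in
theorem Matrix.trace_mul_conjTranspose_re_nonneg {ι : Type*} [Fintype ι] (A : Matrix ι ι ℂ) :
    0 ≤ (A * Aᴴ).trace.re :=
  (Complex.le_def.1 (posSemidef_self_mul_conjTranspose A).trace_nonneg).1

open scoped ComplexOrder in
theorem Matrix.eq_zero_of_trace_mul_conjTranspose_re {ι : Type*} [Fintype ι] {A : Matrix ι ι ℂ}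
    (h : (A * Aᴴ).trace.re = 0) : A = 0 := by
  rw [← trace_mul_conjTranspose_self_eq_zero_iff]
  have := Complex.le_def.1 (posSemidef_self_mul_conjTranspose A).trace_nonneg
  exact Complex.ext h this.2.symm

variable {σ : κ → κ} {X : κ → Matrix (Fin n) (Fin n) ℂ}

/-- Among all simultaneous variations `X i ↦ exp (t • ξ i) * X i * exp (-t • ξ i)` compatible with
the symmetry `(J, σ)`, the norm of `∑ i, X i` is smallest at `t = 0`. -/
def IsSymmMin (J : Matrix (Fin n) (Fin n) ℂ) (σ : κ → κ) (X : κ → Matrix (Fin n) (Fin n) ℂ) :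
    Prop :=
  ∀ ξ : κ → Matrix (Fin n) (Fin n) ℂ, (∀ i, (ξ i)ᴴ = -ξ i) → (∀ i, J * ξ (σ i) * J = ξ i) →
    ∀ t : ℝ, ((∑ i, X i) * ∑ i, X i).trace.re ≤
      ((∑ i, NormedSpace.exp (t • ξ i) * X i * NormedSpace.exp (t • (-ξ i))) *
        ∑ i, NormedSpace.exp (t • ξ i) * X i * NormedSpace.exp (t • (-ξ i))).trace.re

theorem conj_sum_eq_neg (hσ : Function.Involutive σ) (hXJ : ∀ i, J * X (σ i) * J = -X i) :
    J * (∑ i, X i) * J = -∑ i, X i := by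
  rw [← Equiv.sum_comp (hσ.toPerm σ) X, Finset.mul_sum, Finset.sum_mul,
    Equiv.sum_comp (hσ.toPerm σ) X, ← Finset.sum_neg_distrib]
  exact Finset.sum_congr rfl fun i _ => hXJ i

theorem IsSymmMin.commute (hJ : J * J = 1) (hσ : Function.Involutive σ)
    (hX : ∀ i, (X i).IsHermitian) (hXJ : ∀ i, J * X (σ i) * J = -X i) (hmin : IsSymmMin J σ X)
    (i : κ) : Commute (X i) (∑ i, X i) := by
  set β := ∑ i, X i with hβ
  have hβs : βᴴ = β := by rw [hβ, conjTranspose_sum]; exact Finset.sum_congr rfl fun i _ => hX i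
  have hβJ : J * β * J = -β := conj_sum_eq_neg hσ hXJ
  let ξ : κ → Matrix (Fin n) (Fin n) ℂ := fun i => X i * β - β * X i
  have hξ (i) : (ξ i)ᴴ = -ξ i := by
    simp only [ξ, conjTranspose_sub, conjTranspose_mul, hβs, (hX i).eq, neg_sub]
  have h := (first_second_variation X ξ (hmin ξ hξ fun i => by
    simp only [ξ]
    rw [mul_sub, sub_mul, conj_mul_conj hJ, conj_mul_conj hJ, hXJ, hβJ, neg_mul_neg,
      neg_mul_neg])).1
  rw [← hβ, Finset.mul_sum, trace_sum, Complex.re_sum] at h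
  have h2 : ∀ j ∈ Finset.univ, (ξ j * (ξ j)ᴴ).trace.re = 0 := by
    rw [← Finset.sum_eq_zero_iff_of_nonneg fun j _ => trace_mul_conjTranspose_re_nonneg _,
      ← neg_eq_zero, ← h, ← Finset.sum_neg_distrib]
    refine Finset.sum_congr rfl fun j _ => ?_
    rw [trace_mul_commutator, hξ, mul_neg, trace_neg, Complex.neg_re, neg_neg]
  exact sub_eq_zero.1 (eq_zero_of_trace_mul_conjTranspose_re (h2 i (Finset.mem_univ i)))

theorem IsSymmMin.no_raising (hJ : J * J = 1) (hJs : Jᴴ = J) (hσ : Function.Involutive σ)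
    (hX : ∀ i, (X i).IsHermitian) (hXJ : ∀ i, J * X (σ i) * J = -X i) (hmin : IsSymmMin J σ X)
    {z : κ → Matrix (Fin n) (Fin n) ℂ} (hz : ∀ i, Raises (X i) (∑ i, X i) (z i))
    (hz0 : ∑ i, z i = 0) (hzJ : ∀ i, J * (z (σ i))ᴴ * J = -z i) (i : κ) : z i = 0 := by
  have hcomm := hmin.commute hJ hσ hX hXJ
  set β := ∑ i, X i with hβ
  have hβs : βᴴ = β := by rw [hβ, conjTranspose_sum]; exact Finset.sum_congr rfl fun i _ => hX i
  have hβJ : J * β * J = -β := conj_sum_eq_neg hσ hXJ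
  choose ξ hξs hξX hξle hξlt using fun i => (hz i).exists_skew (hX i) hβs (hcomm i)
  let H : κ → Matrix (Fin n) (Fin n) ℂ := fun i => z i + (z i)ᴴ
  have hzJ' (i) : J * z (σ i) * J = -(z i)ᴴ := by
    have := congrArg conjTranspose (hzJ i)
    simpa [hJs, mul_assoc] using this
  have hHJ (i) : J * H (σ i) * J = -H i := by
    simp only [H]
    rw [mul_add, add_mul, hzJ, hzJ', neg_add, add_comm]
  have hH0 : ∑ i, H i = 0 := by
    simp only [H]
    rw [Finset.sum_add_distrib, ← conjTranspose_sum, hz0, conjTranspose_zero, add_zero]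
  have hc (i) : (J * ξ (σ i) * J) * X i - X i * (J * ξ (σ i) * J) = H i := by
    have h1 : J * (ξ (σ i) * X (σ i) - X (σ i) * ξ (σ i)) * J = -H i := by rw [hξX, hHJ]
    rw [mul_sub, sub_mul, conj_mul_conj hJ, conj_mul_conj hJ, hXJ, mul_neg, neg_mul,
      ← neg_sub', neg_inj] at h1
    exact h1
  let η : κ → Matrix (Fin n) (Fin n) ℂ := fun i => (1 / 2 : ℂ) • (ξ i + J * ξ (σ i) * J)
  have hηs (i) : (η i)ᴴ = -η i := by
    simp only [η, conjTranspose_smul, conjTranspose_add, conjTranspose_mul, hξs, hJs, mul_neg,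
      neg_mul, ← mul_assoc]
    rw [← neg_add, smul_neg]
    simp
  have hηJ (i) : J * η (σ i) * J = η i := by
    simp only [η, Matrix.mul_smul, Matrix.smul_mul, hσ i, mul_add, add_mul]
    rw [show J * (J * ξ i * J) * J = (J * J) * ξ i * (J * J) by simp only [mul_assoc], hJ, one_mul,
      mul_one, add_comm]
  have hηX (i) : η i * X i - X i * η i = H i := by
    simp only [η, Matrix.mul_smul, Matrix.smul_mul, mul_add, add_mul]
    rw [← smul_sub, add_sub_add_comm, hc, hξX, ← two_smul ℂ, smul_smul]
    simp [H]
  have h := (first_second_variation X η (hmin η hηs hηJ)).2 (by simp only [hηX, hH0])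
  simp only [hηX, ← hβ] at h
  rw [Finset.mul_sum, trace_sum, Complex.re_sum] at h
  have hconj (i) : ((β * (J * ξ (σ i) * J) - J * ξ (σ i) * J * β) * H i).trace.re =
      ((β * ξ (σ i) - ξ (σ i) * β) * H (σ i)).trace.re := by
    have h1 (M : Matrix (Fin n) (Fin n) ℂ) : (J * M * J).trace = M.trace := by
      rw [trace_mul_comm, ← mul_assoc, hJ, one_mul]
    rw [← h1 ((β * ξ (σ i) - ξ (σ i) * β) * H (σ i)), conj_mul_conj hJ, hHJ, mul_sub J, sub_mul _ _ J,
      conj_mul_conj hJ, conj_mul_conj hJ, hβJ,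
      show -β * (J * ξ (σ i) * J) - J * ξ (σ i) * J * -β =
        -(β * (J * ξ (σ i) * J) - J * ξ (σ i) * J * β) by noncomm_ring, neg_mul_neg]
  have hsum : ∑ i, (β * (η i * H i - H i * η i)).trace.re =
      ∑ i, ((β * ξ i - ξ i * β) * H i).trace.re := by
    have h1 (i) : (β * (η i * H i - H i * η i)).trace.re =
        1 / 2 * (((β * ξ i - ξ i * β) * H i).trace.re +
          ((β * ξ (σ i) - ξ (σ i) * β) * H (σ i)).trace.re) := by
      rw [trace_mul_commutator', ← hconj]
      simp only [η, Matrix.mul_smul, Matrix.smul_mul]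
      rw [← smul_sub, Matrix.smul_mul, trace_smul, mul_add β, add_mul (ξ i), add_sub_add_comm, add_mul, trace_add]
      rw [show (1 / 2 : ℂ) = ((1 / 2 : ℝ) : ℂ) by norm_num, smul_eq_mul, Complex.re_ofReal_mul,
        Complex.add_re]
    rw [Finset.sum_congr rfl fun i _ => h1 i, ← Finset.mul_sum, Finset.sum_add_distrib]
    have h2 := Equiv.sum_comp (hσ.toPerm σ) (fun i => ((β * ξ i - ξ i * β) * H i).trace.re)
    simp only [Function.Involutive.coe_toPerm] at h2
    rw [h2]
    ring
  rw [hsum] at h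
  by_contra hne
  exact absurd h (not_le.2 (Finset.sum_neg' (fun j _ => hξle j) ⟨i, Finset.mem_univ i, hξlt i hne⟩))

theorem IsSymmMin.injective (hJ : J * J = 1) (hJs : Jᴴ = J) (hσ : Function.Involutive σ)
    (hX : ∀ i, (X i).IsHermitian) (hXJ : ∀ i, J * X (σ i) * J = -X i) (hmin : IsSymmMin J σ X)
    (z : κ → Matrix (Fin n) (Fin n) ℂ) (hz : ∀ i, Raises (X i) (∑ i, X i) (z i))
    (hz0 : ∑ i, z i = 0) (i : κ) : z i = 0 := by
  have hβJ : J * (∑ i, X i) * J = -∑ i, X i := conj_sum_eq_neg hσ hXJ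
  have hJJ (A : Matrix (Fin n) (Fin n) ℂ) : J * (J * A * J) * J = A := by
    rw [show J * (J * A * J) * J = (J * J) * A * (J * J) by simp only [mul_assoc], hJ, one_mul,
      mul_one]
  have aux (y : κ → Matrix (Fin n) (Fin n) ℂ) (hy : ∀ i, Raises (X i) (∑ i, X i) (y i))
      (hy0 : ∑ i, y i = 0) (i : κ) : y i - J * (y (σ i))ᴴ * J = 0 := by
    refine hmin.no_raising hJ hJs hσ hX hXJ (z := fun i => y i - J * (y (σ i))ᴴ * J)
      (fun i => (hy i).sub ((hy (σ i)).neg_conj hJ hJs (hXJ i) hβJ)) ?_ (fun i => ?_) i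
    · have h1 := Equiv.sum_comp (hσ.toPerm σ) y
      simp only [Function.Involutive.coe_toPerm] at h1
      rw [Finset.sum_sub_distrib, ← Finset.sum_mul, ← Finset.mul_sum, ← conjTranspose_sum, h1, hy0]
      simp
    · simp only [conjTranspose_sub, conjTranspose_mul, conjTranspose_conjTranspose, hJs, hσ i,
        ← mul_assoc J (y i) J]
      rw [mul_sub, sub_mul, hJJ, neg_sub]
  have h1 := aux z hz hz0 i
  have h2 := aux (fun i => Complex.I • z i) (fun i => (hz i).smul _)
    (by rw [← Finset.smul_sum, hz0, smul_zero]) i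
  simp only [conjTranspose_smul, Matrix.mul_smul, Matrix.smul_mul, RCLike.star_def,
    Complex.conj_I, neg_smul, mul_neg, neg_mul, sub_neg_eq_add, ← sub_eq_zero.1 h1] at h2
  rw [← two_smul ℂ, smul_smul] at h2
  exact (smul_eq_zero.1 h2).resolve_left (by simp)

theorem IsSymmMin.sum_eq_zero [DecidableEq κ] [Nonempty κ] (hJ : J * J = 1) (hJs : Jᴴ = J)
    (hσ : Function.Involutive σ) (hX : ∀ i, (X i).IsHermitian)
    (hXJ : ∀ i, J * X (σ i) * J = -X i) (hmin : IsSymmMin J σ X)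
    {w : κ → Matrix (Fin n) (Fin n) ℂ} (hw : ∀ i, w i ∈ unitaryGroup (Fin n) ℂ)
    (hw0 : ∑ i, w i * X i * (w i)ᴴ = 0) : ∑ i, X i = 0 := by
  have hβJ : J * (∑ i, X i) * J = -∑ i, X i := conj_sum_eq_neg hσ hXJ
  have hβ : (∑ i, X i).IsHermitian := by
    rw [IsHermitian, conjTranspose_sum]
    exact Finset.sum_congr rfl fun i _ => hX i
  have hpos {v : Fin n → ℂ} {c : ℝ} (hv : v ≠ 0) (hc : 0 < c)
      (hβv : (∑ i, X i) *ᵥ v = (c : ℂ) • v) : False :=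
    sum_unitary_conj_ne_zero hX hβ (hmin.commute hJ hσ hX hXJ) rfl hv hc hβv
      (hmin.injective hJ hJs hσ hX hXJ) hw hw0
  rw [← hβ.eigenvalues_eq_zero_iff]
  funext j
  have hv := hβ.mulVec_eigenvectorBasis j
  have hv0 : (hβ.eigenvectorBasis j).ofLp ≠ 0 := fun h =>
    hβ.eigenvectorBasis.toBasis.ne_zero j (by ext k; simpa using congrFun h k)
  rcases lt_trichotomy (hβ.eigenvalues j) 0 with h | h | h
  · exfalso
    refine hpos (v := J *ᵥ (hβ.eigenvectorBasis j).ofLp) (c := -hβ.eigenvalues j) (fun h0 => ?_)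
      (by linarith) ?_
    · apply hv0
      rw [← one_mulVec (hβ.eigenvectorBasis j).ofLp, ← hJ, ← mulVec_mulVec, h0, mulVec_zero]
    · have h1 : (∑ i, X i) * J = -(J * ∑ i, X i) := by
        rw [← mul_neg, ← hβJ, ← mul_assoc, ← mul_assoc, hJ, one_mul]
      rw [mulVec_mulVec, h1, neg_mulVec, ← mulVec_mulVec, hv, mulVec_smul, Complex.ofReal_neg,
        neg_smul]
      rfl
  · exact h
  · exact (hpos hv0 h (by rw [hv]; rfl)).elim

end Minimizer

section Existence

variable {ι : Type*} [Fintype ι] [DecidableEq ι]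

theorem Matrix.exp_smul_neg_eq_conjTranspose {ξ : Matrix ι ι ℂ} (hξ : ξᴴ = -ξ) (t : ℝ) :
    NormedSpace.exp (t • (-ξ)) = (NormedSpace.exp (t • ξ))ᴴ := by
  rw [← exp_conjTranspose, conjTranspose_smul, hξ, star_trivial]

theorem Matrix.exp_smul_mem_unitaryGroup {ξ : Matrix ι ι ℂ} (hξ : ξᴴ = -ξ) (t : ℝ) :
    NormedSpace.exp (t • ξ) ∈ unitaryGroup ι ℂ := by
  rw [mem_unitaryGroup_iff, star_eq_conjTranspose, ← exp_smul_neg_eq_conjTranspose hξ, smul_neg,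
    ← exp_add_of_commute _ _ (Commute.refl (t • ξ)).neg_right, add_neg_cancel,
    NormedSpace.exp_zero]

theorem Matrix.exp_smul_involution_conj {J ξ : Matrix ι ι ℂ} (hJ : J * J = 1) (t : ℝ) :
    NormedSpace.exp (t • (J * ξ * J)) = J * NormedSpace.exp (t • ξ) * J := by
  have h1 : J⁻¹ = J := inv_eq_right_inv hJ
  have h2 := exp_conj J (t • ξ) ⟨⟨J, J, hJ, hJ⟩, rfl⟩
  rw [h1, Matrix.mul_smul, Matrix.smul_mul] at h2
  exact h2

theorem exists_conj_sub_conj_eq {n : ℕ} {J X₀ S₀ a b : Matrix (Fin n) (Fin n) ℂ} (hJ : J * J = 1)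
    (hJs : Jᴴ = J) (hX₀ : X₀.IsHermitian) (hS₀ : S₀.IsHermitian) (hSJ : J * S₀ * J = -S₀)
    (ha : a ∈ unitaryGroup (Fin n) ℂ) (hb : b ∈ unitaryGroup (Fin n) ℂ)
    (hab : a * X₀ * aᴴ - b * X₀ * bᴴ = S₀) :
    ∃ u ∈ unitaryGroup (Fin n) ℂ, ∃ k ∈ unitaryGroup (Fin n) ℂ, k * J = J * k ∧
      u * X₀ * uᴴ - J * (u * X₀ * uᴴ) * J = k * S₀ * kᴴ := by
  let D : unitaryGroup (Fin n) ℂ × unitaryGroup (Fin n) ℂ → Matrix (Fin n) (Fin n) ℂ := fun x =>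
    (x.1 : Matrix (Fin n) (Fin n) ℂ) * X₀ * (x.1 : Matrix (Fin n) (Fin n) ℂ)ᴴ -
      J * ((x.1 : Matrix (Fin n) (Fin n) ℂ) * X₀ * (x.1 : Matrix (Fin n) (Fin n) ℂ)ᴴ) * J -
      (x.2 : Matrix (Fin n) (Fin n) ℂ) * S₀ * (x.2 : Matrix (Fin n) (Fin n) ℂ)ᴴ
  have hD : Continuous D := by fun_prop
  let K : Set (unitaryGroup (Fin n) ℂ × unitaryGroup (Fin n) ℂ) :=
    {x | (x.2 : Matrix (Fin n) (Fin n) ℂ) * J = J * (x.2 : Matrix (Fin n) (Fin n) ℂ)}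
  have hK : IsClosed K := isClosed_eq (by fun_prop) (by fun_prop)
  obtain ⟨⟨u, k⟩, hk, hmin⟩ := hK.isCompact.exists_isMinOn (f := fun x => (D x * D x).trace.re)
    ⟨(1, 1), by simp [K]⟩
    (Complex.continuous_re.comp (Continuous.matrix_trace (hD.mul hD))).continuousOn
  refine ⟨u, u.2, k, k.2, hk, ?_⟩
  obtain ⟨u, hu⟩ := u
  obtain ⟨k, hk'⟩ := k
  replace hk : k * J = J * k := hk
  have huu : uᴴ * u = 1 := mem_unitaryGroup_iff'.1 hu
  have hkk : kᴴ * k = 1 := mem_unitaryGroup_iff'.1 hk'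
  have hkJ : J * kᴴ = kᴴ * J := by
    have := congrArg conjTranspose hk
    rwa [conjTranspose_mul, conjTranspose_mul, hJs] at this
  have hJu : J ∈ unitaryGroup (Fin n) ℂ := by
    rw [mem_unitaryGroup_iff, star_eq_conjTranspose, hJs, hJ]
  have hJJ (A : Matrix (Fin n) (Fin n) ℂ) : J * (J * A * J) * J = A := by
    rw [show J * (J * A * J) * J = (J * J) * A * (J * J) by simp only [mul_assoc], hJ, one_mul,
      mul_one]
  let X : Fin 3 → Matrix (Fin n) (Fin n) ℂ :=
    ![u * X₀ * uᴴ, -(J * (u * X₀ * uᴴ) * J), -(k * S₀ * kᴴ)]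
  have hσ : Function.Involutive (Equiv.swap (0 : Fin 3) 1) := Equiv.swap_apply_self 0 1
  have hX : ∀ i, (X i).IsHermitian := by
    have h1 := isHermitian_mul_mul_conjTranspose u hX₀
    have h2 := isHermitian_mul_mul_conjTranspose k hS₀
    have h3 := isHermitian_mul_mul_conjTranspose J h1
    rw [hJs] at h3
    intro i
    fin_cases i
    · exact h1
    · exact h3.neg
    · exact h2.neg
  have hXJ : ∀ i, J * X (Equiv.swap 0 1 i) * J = -X i := by
    intro i
    fin_cases i
    · change J * -(J * (u * X₀ * uᴴ) * J) * J = -(u * X₀ * uᴴ)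
      rw [mul_neg, neg_mul, hJJ]
    · change J * (u * X₀ * uᴴ) * J = - -(J * (u * X₀ * uᴴ) * J)
      rw [neg_neg]
    · change J * -(k * S₀ * kᴴ) * J = - -(k * S₀ * kᴴ)
      rw [mul_neg, neg_mul, show J * (k * S₀ * kᴴ) * J = J * k * S₀ * (kᴴ * J) by
        simp only [mul_assoc], ← hk, ← hkJ, show k * J * S₀ * (J * kᴴ) = k * (J * S₀ * J) * kᴴ by
        simp only [mul_assoc], hSJ, mul_neg, neg_mul]
  have hmin' : IsSymmMin J (Equiv.swap 0 1) X := by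
    intro ξ hξ hξJ t
    have e1 : ξ 1 = J * ξ 0 * J := (hξJ 1).symm
    have e2 : J * ξ 2 * J = ξ 2 := hξJ 2
    have hE := exp_smul_mem_unitaryGroup (hξ 0) t
    have hE' := exp_smul_mem_unitaryGroup (hξ 2) t
    have hcomm : NormedSpace.exp (t • ξ 2) * J = J * NormedSpace.exp (t • ξ 2) := by
      have := exp_smul_involution_conj (ξ := ξ 2) hJ t
      rw [e2] at this
      nth_rewrite 1 [this]
      rw [mul_assoc, hJ, mul_one]
    have h := hmin (show (⟨⟨_, mul_mem hE hu⟩, ⟨_, mul_mem hE' hk'⟩⟩ :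
      unitaryGroup (Fin n) ℂ × unitaryGroup (Fin n) ℂ) ∈ K from by
        change NormedSpace.exp (t • ξ 2) * k * J = J * (NormedSpace.exp (t • ξ 2) * k)
        rw [mul_assoc, hk, ← mul_assoc, hcomm, mul_assoc])
    have h1 : D ⟨⟨u, hu⟩, ⟨k, hk'⟩⟩ = ∑ i, X i := by
      simp [D, X, Fin.sum_univ_three, sub_eq_add_neg]
    have h2 : D ⟨⟨_, mul_mem hE hu⟩, ⟨_, mul_mem hE' hk'⟩⟩ =
        ∑ i, NormedSpace.exp (t • ξ i) * X i * NormedSpace.exp (t • (-ξ i)) := by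
      simp only [exp_smul_neg_eq_conjTranspose (hξ _)]
      rw [Fin.sum_univ_three, e1, exp_smul_involution_conj hJ]
      change NormedSpace.exp (t • ξ 0) * u * X₀ * (NormedSpace.exp (t • ξ 0) * u)ᴴ -
        J * (NormedSpace.exp (t • ξ 0) * u * X₀ * (NormedSpace.exp (t • ξ 0) * u)ᴴ) * J -
        NormedSpace.exp (t • ξ 2) * k * S₀ * (NormedSpace.exp (t • ξ 2) * k)ᴴ =
        NormedSpace.exp (t • ξ 0) * (u * X₀ * uᴴ) * (NormedSpace.exp (t • ξ 0))ᴴ +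
        J * NormedSpace.exp (t • ξ 0) * J * -(J * (u * X₀ * uᴴ) * J) *
          (J * NormedSpace.exp (t • ξ 0) * J)ᴴ +
        NormedSpace.exp (t • ξ 2) * -(k * S₀ * kᴴ) * (NormedSpace.exp (t • ξ 2))ᴴ
      have h3 (E : Matrix (Fin n) (Fin n) ℂ) : (J * E * J)ᴴ = J * Eᴴ * J := by
        rw [conjTranspose_mul, conjTranspose_mul, hJs, mul_assoc]
      rw [h3, mul_neg, neg_mul, ← conj_mul_conj hJ, ← conj_mul_conj hJ]
      simp only [conjTranspose_mul, sub_eq_add_neg, mul_neg, neg_mul, mul_assoc]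
    rw [← h1, ← h2]
    exact h
  have hsum := hmin'.sum_eq_zero hJ hJs hσ hX hXJ (w := ![a * uᴴ, b * uᴴ * J, kᴴ]) (fun i => by
    fin_cases i
    · exact mul_mem ha (Unitary.star_mem hu)
    · exact mul_mem (mul_mem hb (Unitary.star_mem hu)) hJu
    · exact (Unitary.star_mem hk')) (by
    rw [Fin.sum_univ_three]
    change a * uᴴ * (u * X₀ * uᴴ) * (a * uᴴ)ᴴ +
      b * uᴴ * J * -(J * (u * X₀ * uᴴ) * J) * (b * uᴴ * J)ᴴ + kᴴ * -(k * S₀ * kᴴ) * kᴴᴴ = 0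
    have h1 (c : Matrix (Fin n) (Fin n) ℂ) : c * uᴴ * (u * X₀ * uᴴ) * (c * uᴴ)ᴴ = c * X₀ * cᴴ := by
      rw [conjTranspose_mul, conjTranspose_conjTranspose,
        show c * uᴴ * (u * X₀ * uᴴ) * (u * cᴴ) = c * (uᴴ * u) * X₀ * ((uᴴ * u) * cᴴ) by
          simp only [mul_assoc], huu, mul_one, one_mul]
    have h2 : b * uᴴ * J * -(J * (u * X₀ * uᴴ) * J) * (b * uᴴ * J)ᴴ = -(b * X₀ * bᴴ) := by
      rw [← h1 b, conjTranspose_mul _ J, hJs, mul_neg, neg_mul,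
        show b * uᴴ * J * (J * (u * X₀ * uᴴ) * J) * (J * (b * uᴴ)ᴴ) =
          b * uᴴ * (J * J) * (u * X₀ * uᴴ) * ((J * J) * (b * uᴴ)ᴴ) by simp only [mul_assoc],
        hJ, mul_one, one_mul]
    have h3 : kᴴ * -(k * S₀ * kᴴ) * kᴴᴴ = -S₀ := by
      rw [conjTranspose_conjTranspose, mul_neg, neg_mul,
        show kᴴ * (k * S₀ * kᴴ) * k = (kᴴ * k) * S₀ * (kᴴ * k) by simp only [mul_assoc], hkk,
        one_mul, mul_one]
    rw [h1, h2, h3, ← hab]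
    abel)
  rw [Fin.sum_univ_three] at hsum
  exact sub_eq_zero.1 (by simpa [X, sub_eq_add_neg] using hsum)

end Existence

section EigVec

theorem eigVec_antitone {k : ℕ} {X : Matrix (Fin k) (Fin k) ℂ} (hX : X.IsHermitian) :
    Antitone (eigVec X hX) := fun _ _ h =>
  Tuple.monotone_sort hX.eigenvalues (Fin.rev_le_rev.2 h)

theorem eigVec_eq_comp {k : ℕ} {X : Matrix (Fin k) (Fin k) ℂ} (hX : X.IsHermitian) :
    eigVec X hX = hX.eigenvalues ∘ (Fin.revPerm.trans (Tuple.sort hX.eigenvalues)) := rfl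

theorem charpoly_eq_prod_eigVec {k : ℕ} {X : Matrix (Fin k) (Fin k) ℂ} (hX : X.IsHermitian) :
    X.charpoly = ∏ i, (Polynomial.X - Polynomial.C (eigVec X hX i : ℂ)) := by
  rw [hX.charpoly_eq, eigVec_eq_comp]
  exact (Equiv.prod_comp (Fin.revPerm.trans (Tuple.sort hX.eigenvalues))
    fun i => Polynomial.X - Polynomial.C (hX.eigenvalues i : ℂ)).symm

theorem Antitone.eq_of_map_univ_eq {k : ℕ} {f g : Fin k → ℝ} (hf : Antitone f) (hg : Antitone g)
    (h : Finset.univ.val.map f = Finset.univ.val.map g) : f = g := by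
  rw [Fin.univ_val_map, Fin.univ_val_map, Multiset.coe_eq_coe] at h
  exact List.ofFn_injective (h.eq_of_pairwise' hf.sortedGE_ofFn.pairwise hg.sortedGE_ofFn.pairwise)

theorem eigVec_eq_of_charpoly {k : ℕ} {X : Matrix (Fin k) (Fin k) ℂ} (hX : X.IsHermitian)
    {d : Fin k → ℝ} (hd : Antitone d)
    (h : X.charpoly = ∏ i, (Polynomial.X - Polynomial.C (d i : ℂ))) : eigVec X hX = d := by
  refine (eigVec_antitone hX).eq_of_map_univ_eq hd ?_
  have hroots (f : Fin k → ℝ) : (∏ i, (Polynomial.X - Polynomial.C (f i : ℂ))).roots =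
      (Finset.univ.val.map f).map ((↑) : ℝ → ℂ) := by
    rw [Polynomial.roots_prod _ _ (by
      simp [Finset.prod_ne_zero_iff, Polynomial.X_sub_C_ne_zero])]
    simp [Function.comp_def]
  rw [charpoly_eq_prod_eigVec hX] at h
  have h1 := congrArg Polynomial.roots h
  rw [hroots, hroots] at h1
  exact Multiset.map_injective Complex.ofReal_injective h1

theorem exists_eq_conj_diagonal_eigVec {k : ℕ} {X : Matrix (Fin k) (Fin k) ℂ}
    (hX : X.IsHermitian) : ∃ U ∈ unitaryGroup (Fin k) ℂ,
      X = U * diagonal (fun i => (eigVec X hX i : ℂ)) * Uᴴ := by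
  let τ := Fin.revPerm.trans (Tuple.sort hX.eigenvalues)
  let V : Matrix (Fin k) (Fin k) ℂ := hX.eigenvectorUnitary
  have hV : V * Vᴴ = 1 := mem_unitaryGroup_iff.1 hX.eigenvectorUnitary.2
  have hX' : X = V * diagonal (fun i => (hX.eigenvalues i : ℂ)) * Vᴴ := by
    conv_lhs => rw [hX.spectral_theorem, Unitary.conjStarAlgAut_apply]
    rfl
  refine ⟨V.submatrix id τ, ?_, ?_⟩
  · rw [mem_unitaryGroup_iff, star_eq_conjTranspose, conjTranspose_submatrix, submatrix_mul_equiv,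
      hV, submatrix_id_id]
  · have h1 : diagonal (fun i => (eigVec X hX i : ℂ)) =
        (diagonal (fun i => (hX.eigenvalues i : ℂ))).submatrix τ τ := by
      rw [submatrix_diagonal_equiv]
      rfl
    rw [h1, conjTranspose_submatrix, submatrix_mul_equiv, submatrix_mul_equiv, submatrix_id_id,
      ← hX']

theorem charpoly_unitary_conj {k : ℕ} {U : Matrix (Fin k) (Fin k) ℂ}
    (hU : U ∈ unitaryGroup (Fin k) ℂ) (A : Matrix (Fin k) (Fin k) ℂ) :
    (U * A * Uᴴ).charpoly = A.charpoly := by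
  have hUU : Uᴴ * U = 1 := mem_unitaryGroup_iff'.1 hU
  rw [charpoly_mul_comm, ← mul_assoc, hUU, one_mul]

theorem eigVec_eq_of_eq_conj_diagonal {k : ℕ} {X U : Matrix (Fin k) (Fin k) ℂ}
    (hX : X.IsHermitian) (hU : U ∈ unitaryGroup (Fin k) ℂ) {d : Fin k → ℝ} (hd : Antitone d)
    (h : X = U * diagonal (fun i => (d i : ℂ)) * Uᴴ) : eigVec X hX = d := by
  apply eigVec_eq_of_charpoly hX hd
  rw [h, charpoly_unitary_conj hU, charpoly_diagonal]

theorem eigVec_congr {k : ℕ} {X Y : Matrix (Fin k) (Fin k) ℂ} (hX : X.IsHermitian)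
    (hY : Y.IsHermitian) (h : X = Y) : eigVec X hX = eigVec Y hY := by
  subst h; rfl

theorem eigVec_unitary_conj {k : ℕ} {X Y U : Matrix (Fin k) (Fin k) ℂ} (hX : X.IsHermitian)
    (hY : Y.IsHermitian) (hU : U ∈ unitaryGroup (Fin k) ℂ) (h : Y = U * X * Uᴴ) :
    eigVec Y hY = eigVec X hX := by
  apply eigVec_eq_of_charpoly hY (eigVec_antitone hX)
  rw [h, charpoly_unitary_conj hU, ← charpoly_eq_prod_eigVec]

theorem exists_unitary_conj_of_eigVec_eq {k : ℕ} {X Y : Matrix (Fin k) (Fin k) ℂ}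
    (hX : X.IsHermitian) (hY : Y.IsHermitian) (h : eigVec X hX = eigVec Y hY) :
    ∃ U ∈ unitaryGroup (Fin k) ℂ, Y = U * X * Uᴴ := by
  obtain ⟨V, hV, hXV⟩ := exists_eq_conj_diagonal_eigVec hX
  obtain ⟨W, hW, hYW⟩ := exists_eq_conj_diagonal_eigVec hY
  have hVV : Vᴴ * V = 1 := mem_unitaryGroup_iff'.1 hV
  refine ⟨W * Vᴴ, mul_mem hW (Unitary.star_mem hV), ?_⟩
  rw [← h] at hYW
  generalize diagonal (fun i => (eigVec X hX i : ℂ)) = D at hXV hYW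
  rw [hXV, hYW, conjTranspose_mul, conjTranspose_conjTranspose,
    show W * Vᴴ * (V * D * Vᴴ) * (V * Wᴴ) = W * (Vᴴ * V) * D * ((Vᴴ * V) * Wᴴ) by
      simp only [mul_assoc], hVV, mul_one, one_mul]

theorem starVec_antitone {k : ℕ} {d : Fin k → ℝ} (hd : Antitone d) : Antitone (starVec d) :=
  fun _ _ h => neg_le_neg (hd (Fin.rev_le_rev.2 h))

theorem eigVec_neg {k : ℕ} {X : Matrix (Fin k) (Fin k) ℂ} (hX : X.IsHermitian) :
    eigVec (-X) hX.neg = starVec (eigVec X hX) := by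
  apply eigVec_eq_of_charpoly _ (starVec_antitone (eigVec_antitone hX))
  obtain ⟨U, hU, h⟩ := exists_eq_conj_diagonal_eigVec hX
  have h1 : -X = U * diagonal (fun i => -(eigVec X hX i : ℂ)) * Uᴴ := by
    conv_lhs => rw [h]
    rw [← neg_mul, ← mul_neg, diagonal_neg]
  rw [h1, charpoly_unitary_conj hU, charpoly_diagonal, ← Equiv.prod_comp Fin.revPerm]
  simp [starVec]

theorem eigVec_smul {k : ℕ} {X : Matrix (Fin k) (Fin k) ℂ} (hX : X.IsHermitian) {c : ℝ}
    (hc : 0 ≤ c) (hcX : ((c : ℂ) • X).IsHermitian) :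
    eigVec ((c : ℂ) • X) hcX = fun i => c * eigVec X hX i := by
  obtain ⟨U, hU, h⟩ := exists_eq_conj_diagonal_eigVec hX
  refine eigVec_eq_of_eq_conj_diagonal hcX hU
    (fun _ _ hij => mul_le_mul_of_nonneg_left (eigVec_antitone hX hij) hc) ?_
  conv_lhs => rw [h]
  rw [← Matrix.smul_mul, ← Matrix.mul_smul, ← diagonal_smul]
  congr 3
  ext i
  simp

end EigVec

section SingularValues

open scoped ComplexOrder in
theorem eigVec_mul_conjTranspose_nonneg {a b : ℕ} (Y : Matrix (Fin a) (Fin b) ℂ) (i : Fin a) :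
    0 ≤ eigVec (Y * Yᴴ) (isHermitian_mul_conjTranspose_self Y) i :=
  (posSemidef_self_mul_conjTranspose Y).eigenvalues_nonneg _

open scoped ComplexOrder in
theorem eigVec_mul_conjTranspose_eq_zero {a b : ℕ} (Y : Matrix (Fin a) (Fin b) ℂ) (hab : b ≤ a)
    (i : Fin a) (hi : b ≤ i) :
    eigVec (Y * Yᴴ) (isHermitian_mul_conjTranspose_self Y) i = 0 := by
  obtain ⟨r, rfl⟩ := Nat.exists_eq_add_of_le hab
  have hZ := isHermitian_conjTranspose_mul_self Y
  have hnn (j) : 0 ≤ eigVec (Yᴴ * Y) hZ j := (posSemidef_conjTranspose_mul_self Y).eigenvalues_nonneg _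
  have h := eigVec_eq_of_charpoly (isHermitian_mul_conjTranspose_self Y)
    (d := fun j : Fin (b + r) => if h : (j : ℕ) < b then eigVec (Yᴴ * Y) hZ ⟨j, h⟩ else 0)
    (fun j k hjk => by
      have hjk' : (j : ℕ) ≤ k := hjk
      dsimp only
      split_ifs with h1 h2
      · exact eigVec_antitone hZ hjk
      · omega
      · exact hnn _
      · exact le_rfl) (by
    rw [charpoly_mul_comm_of_le _ _ (by simp), charpoly_eq_prod_eigVec hZ, Fin.prod_univ_add]
    simp [mul_comm])
  rw [h]
  simp [hi]

theorem sval_nonneg {a b : ℕ} (Y : Matrix (Fin a) (Fin b) ℂ) (i : ℕ) : 0 ≤ sval Y i := by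
  unfold sval
  split_ifs
  · exact Real.sqrt_nonneg _
  · exact le_rfl

theorem sval_antitone {a b : ℕ} (Y : Matrix (Fin a) (Fin b) ℂ) : Antitone (sval Y) := by
  intro i j hij
  by_cases hj : j < a
  · rw [sval, sval, dif_pos hj, dif_pos (hij.trans_lt hj)]
    exact Real.sqrt_le_sqrt (eigVec_antitone _ hij)
  · rw [sval, dif_neg hj]
    exact sval_nonneg Y i

theorem hatPQ_antitone {p q : ℕ} {s : Fin q → ℝ} (hs : Antitone s)
    (hs0 : ∀ i, 0 ≤ s i) : Antitone (hatPQ p q s) := by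
  intro i j hij
  have hij' : (i : ℕ) ≤ j := hij
  have hi := i.isLt
  have hj := j.isLt
  unfold hatPQ
  by_cases h1 : (i : ℕ) < q <;> by_cases h2 : (j : ℕ) < q
  · rw [dif_pos h1, dif_pos h2]
    exact hs hij
  · rw [dif_pos h1, dif_neg h2]
    split_ifs
    · exact hs0 _
    · linarith [hs0 ⟨i, h1⟩, hs0 ⟨p + q - 1 - j, by omega⟩]
  · omega
  · rw [dif_neg h1, dif_neg h2]
    split_ifs
    · exact le_rfl
    · omega
    · linarith [hs0 ⟨p + q - 1 - j, by omega⟩]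
    · refine neg_le_neg (hs ?_)
      rw [Fin.mk_le_mk]
      omega

theorem hatM_isHermitian {p q : ℕ} (Y : Matrix (Fin p) (Fin q) ℂ) : (hatM p q Y).IsHermitian := by
  have : (fromBlocks 0 Y Yᴴ 0 : Matrix (Fin p ⊕ Fin q) (Fin p ⊕ Fin q) ℂ).IsHermitian := by
    rw [IsHermitian, fromBlocks_conjTranspose]
    simp
  exact this.submatrix _

theorem pow_mul_eval_charpoly_hatM {p q : ℕ} (Y : Matrix (Fin p) (Fin q) ℂ) (t : ℂ) :
    t ^ p * (hatM p q Y).charpoly.eval t = t ^ q * (Y * Yᴴ).charpoly.eval (t ^ 2) := by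
  rw [hatM, charpoly_reindex, eval_charpoly, eval_charpoly]
  have h : (scalar (Fin p ⊕ Fin q) t - fromBlocks 0 Y Yᴴ 0) *
      fromBlocks (scalar (Fin p) t) 0 Yᴴ (1 : Matrix (Fin q) (Fin q) ℂ) =
      fromBlocks (scalar (Fin p) (t ^ 2) - Y * Yᴴ) (-Y) 0 (scalar (Fin q) t) := by
    have h1 : scalar (Fin p ⊕ Fin q) t - fromBlocks 0 Y Yᴴ 0 =
        fromBlocks (scalar (Fin p) t) (-Y) (-Yᴴ) (scalar (Fin q) t) := by
      ext (i | i) (j | j) <;> simp [diagonal_apply]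
    rw [h1, fromBlocks_multiply]
    congr 1
    · simp [pow_two, sub_eq_add_neg]
    · simp
    · simp [← smul_eq_mul_diagonal, ← smul_eq_diagonal_mul]
    · simp
  have h2 := congrArg det h
  rw [det_mul, det_fromBlocks_zero₁₂, det_fromBlocks_zero₂₁] at h2
  simp only [scalar_apply, det_diagonal, Finset.prod_const, Finset.card_univ, Fintype.card_fin,
    det_one, mul_one] at h2
  rw [mul_comm, scalar_apply, h2, mul_comm, scalar_apply]

theorem eigVec_hatM {p q : ℕ} (hpq : q ≤ p) (Y : Matrix (Fin p) (Fin q) ℂ)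
    (hY : (hatM p q Y).IsHermitian) :
    eigVec (hatM p q Y) hY = hatPQ p q fun i => sval Y i := by
  refine eigVec_eq_of_charpoly hY
    (hatPQ_antitone (fun i j hij => sval_antitone Y hij) fun i => sval_nonneg Y i) ?_
  have hX : (Polynomial.X ^ p : Polynomial ℂ) ≠ 0 := pow_ne_zero _ Polynomial.X_ne_zero
  refine mul_left_cancel₀ hX (Polynomial.funext fun t => ?_)
  rw [Polynomial.eval_mul, Polynomial.eval_pow, Polynomial.eval_X, pow_mul_eval_charpoly_hatM,
    charpoly_eq_prod_eigVec (isHermitian_mul_conjTranspose_self Y), Polynomial.eval_prod,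
    Polynomial.eval_mul, Polynomial.eval_pow, Polynomial.eval_X, Polynomial.eval_prod]
  simp only [Polynomial.eval_sub, Polynomial.eval_X, Polynomial.eval_C]
  have hz := eigVec_mul_conjTranspose_eq_zero Y hpq
  have hs : ∀ i : Fin p, (eigVec (Y * Yᴴ) (isHermitian_mul_conjTranspose_self Y) i : ℂ) =
      (sval Y i : ℂ) ^ 2 := fun i => by
    rw [sval, dif_pos i.2, ← Complex.ofReal_pow, Real.sq_sqrt (eigVec_mul_conjTranspose_nonneg Y i)]
  obtain ⟨r, rfl⟩ := Nat.exists_eq_add_of_le hpq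
  have e1 (i : Fin q) : hatPQ (q + r) q (fun i => sval Y i) (Fin.castAdd q (Fin.castAdd r i)) =
      sval Y i := by simp [hatPQ]
  have e2 (i : Fin r) : hatPQ (q + r) q (fun i => sval Y i) (Fin.castAdd q (Fin.natAdd q i)) =
      0 := by simp [hatPQ]
  have e3 (i : Fin q) : hatPQ (q + r) q (fun i => sval Y i) (Fin.natAdd (q + r) i) =
      -sval Y i.rev := by
    have : q + r + q - 1 - (q + r + i) = i.rev := by simp; omega
    simp only [hatPQ, Fin.val_natAdd, this]
    rw [dif_neg (by omega), dif_neg (by omega)]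
  have e4 (i : Fin r) : eigVec (Y * Yᴴ) (isHermitian_mul_conjTranspose_self Y) (Fin.natAdd q i) =
      0 := hz _ (by simp)
  have e5 : ∏ i : Fin q, (t - ((hatPQ (q + r) q (fun i => sval Y i) (Fin.natAdd (q + r) i) : ℝ) : ℂ))
      = ∏ i : Fin q, (t + sval Y i) := by
    rw [← Equiv.prod_comp Fin.revPerm (fun i : Fin q => t + (sval Y i : ℂ))]
    refine Finset.prod_congr rfl fun i _ => ?_
    rw [e3, Complex.ofReal_neg, sub_neg_eq_add]
    rfl
  rw [Fin.prod_univ_add _ (a := q + r) (b := q), e5, Fin.prod_univ_add, Fin.prod_univ_add]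
  simp only [e1, e2, e4, Complex.ofReal_zero, sub_zero, Finset.prod_const, Finset.card_univ,
    Fintype.card_fin]
  have e6 : ∏ i : Fin q, (t ^ 2 - ((eigVec (Y * Yᴴ) (isHermitian_mul_conjTranspose_self Y)
      (Fin.castAdd r i) : ℝ) : ℂ)) =
      (∏ i : Fin q, (t - sval Y i)) * ∏ i : Fin q, (t + sval Y i) := by
    rw [← Finset.prod_mul_distrib]
    refine Finset.prod_congr rfl fun i _ => ?_
    rw [hs, Fin.val_castAdd]
    ring
  rw [e6]
  ring

theorem exists_sval_eq {p q : ℕ} (hpq : q ≤ p) {s : Fin q → ℝ} (hs : Antitone s)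
    (hs0 : ∀ i, 0 ≤ s i) : ∃ S : Matrix (Fin p) (Fin q) ℂ, ∀ i : Fin q, sval S i = s i := by
  let S : Matrix (Fin p) (Fin q) ℂ := Matrix.of fun i j => if (i : ℕ) = j then (s j : ℂ) else 0
  let d : Fin p → ℝ := fun i => if h : (i : ℕ) < q then s ⟨i, h⟩ ^ 2 else 0
  have hd : Antitone d := by
    intro i j hij
    have hij' : (i : ℕ) ≤ j := hij
    dsimp only [d]
    split_ifs with h1 h2
    · exact pow_le_pow_left₀ (hs0 _) (hs hij) 2
    · omega
    · positivity
    · exact le_rfl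
  have hS : S * Sᴴ = diagonal fun i => (d i : ℂ) := by
    ext i j
    rw [mul_apply, diagonal_apply]
    simp only [S, conjTranspose_apply, of_apply, apply_ite star, star_zero, ite_mul, zero_mul,
      mul_ite, mul_zero]
    by_cases hi : (i : ℕ) < q
    · rw [Finset.sum_eq_single ⟨i, hi⟩]
      · by_cases hij : i = j
        · subst hij
          simp [d, hi, pow_two]
        · simp [hij, Fin.val_inj, Ne.symm hij]
      · intro k _ hk
        have : (i : ℕ) ≠ k := fun h => hk (Fin.ext h.symm)
        simp [this]
      · simp
    · have hk (k : Fin q) : (i : ℕ) ≠ k := by omega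
      simp [hk, d, hi]
  refine ⟨S, fun i => ?_⟩
  have h := eigVec_eq_of_eq_conj_diagonal (isHermitian_mul_conjTranspose_self S)
    (one_mem (unitaryGroup (Fin p) ℂ)) hd (by simpa using hS)
  rw [sval, dif_pos (i.2.trans_le hpq), h]
  simp [d, Real.sqrt_sq (hs0 i)]

end SingularValues

section BlockInvolution

/-- The signature matrix `diag(I_p, -I_q)`. -/
def signMat (p q : ℕ) : Matrix (Fin (p + q)) (Fin (p + q)) ℂ :=
  reindex finSumFinEquiv finSumFinEquiv (fromBlocks 1 0 0 (-1))

theorem signMat_mul_self (p q : ℕ) : signMat p q * signMat p q = 1 := by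
  simp [signMat, submatrix_mul_equiv, fromBlocks_multiply]

theorem signMat_conjTranspose (p q : ℕ) : (signMat p q)ᴴ = signMat p q := by
  simp [signMat, conjTranspose_submatrix, fromBlocks_conjTranspose]

theorem signMat_mem_unitaryGroup (p q : ℕ) : signMat p q ∈ unitaryGroup (Fin (p + q)) ℂ := by
  rw [mem_unitaryGroup_iff, star_eq_conjTranspose, signMat_conjTranspose, signMat_mul_self]

theorem signMat_mul_hatM_mul_signMat {p q : ℕ} (Y : Matrix (Fin p) (Fin q) ℂ) :
    signMat p q * hatM p q Y * signMat p q = -hatM p q Y := by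
  simp only [signMat, hatM, reindex_apply, submatrix_mul_equiv, fromBlocks_multiply]
  ext i j
  refine Fin.addCases (fun i => ?_) (fun i => ?_) i <;>
    refine Fin.addCases (fun j => ?_) (fun j => ?_) j <;> simp

theorem sub_signMat_mul_mul_signMat {p q : ℕ} {X : Matrix (Fin (p + q)) (Fin (p + q)) ℂ}
    (hX : X.IsHermitian) :
    X - signMat p q * X * signMat p q = (2 : ℂ) • hatM p q (blockTR p q X) := by
  obtain ⟨Z, rfl⟩ := (reindex finSumFinEquiv finSumFinEquiv).surjective X
  have hZ : Z.IsHermitian := by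
    simpa using hX.submatrix finSumFinEquiv
  have h12 : Z.toBlocks₂₁ = Z.toBlocks₁₂ᴴ := by
    ext i j
    exact (hZ.apply _ _).symm
  have hb : blockTR p q (reindex finSumFinEquiv finSumFinEquiv Z) = Z.toBlocks₁₂ := by
    ext i j
    simp [blockTR, toBlocks₁₂]
  rw [hb, ← fromBlocks_toBlocks Z, h12]
  simp only [signMat, hatM, reindex_apply, submatrix_mul_equiv, fromBlocks_multiply]
  ext i j
  refine Fin.addCases (fun i => ?_) (fun i => ?_) i <;>
    refine Fin.addCases (fun j => ?_) (fun j => ?_) j <;> simp [two_mul]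

end BlockInvolution

theorem stmt_1 (p q : ℕ) (hq : 1 ≤ q) (hpq : q ≤ p)
    (lam : Fin (p + q) → ℝ) (hlam : Antitone lam)
    (s : Fin q → ℝ) (hs : Antitone s) (hs0 : ∀ i, 0 ≤ s i) :
    (lam, s) ∈ coneA p q ↔
      (lam, starVec lam, fun i => 2 * hatPQ p q s i) ∈ Horn (p + q) := by
  have hherm (Y : Matrix (Fin p) (Fin q) ℂ) : ((2 : ℂ) • hatM p q Y).IsHermitian := by
    rw [IsHermitian, conjTranspose_smul, (hatM_isHermitian Y).eq]
    simp
  have hhat (Y : Matrix (Fin p) (Fin q) ℂ) : eigVec ((2 : ℂ) • hatM p q Y) (hherm Y) =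
      fun i => 2 * hatPQ p q (fun i => sval Y i) i := by
    rw [← eigVec_hatM hpq Y (hatM_isHermitian Y)]
    exact eigVec_smul (hatM_isHermitian Y) zero_le_two (by simpa using hherm Y)
  have hJU := signMat_mem_unitaryGroup p q
  have hJs := signMat_conjTranspose p q
  constructor
  · rintro ⟨X, hX, h1, h2⟩
    have hJX : (signMat p q * X * signMat p q).IsHermitian := by
      simpa [hJs] using isHermitian_mul_mul_conjTranspose (signMat p q) hX
    refine ⟨X, -(signMat p q * X * signMat p q), hX, hJX.neg, h1, ?_, ?_⟩
    · rw [eigVec_neg hJX, eigVec_unitary_conj hX hJX hJU (by rw [hJs])]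
      exact congrArg starVec h1
    · have hs' : s = fun i : Fin q => sval (blockTR p q X) i := funext h2
      rw [eigVec_congr _ (hherm (blockTR p q X))
        ((sub_eq_add_neg _ _).symm.trans (sub_signMat_mul_mul_signMat hX)), hhat, ← hs']
  · rintro ⟨X, Y, hX, hY, h1, h2, h3⟩
    dsimp only at h1 h2 h3
    obtain ⟨b, hb, rfl⟩ := exists_unitary_conj_of_eigVec_eq hX.neg hY
      (by rw [eigVec_neg hX, ← h1, h2])
    obtain ⟨S, hS⟩ := exists_sval_eq hpq hs hs0
    have hS' : (fun i : Fin q => sval S i) = s := funext hS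
    obtain ⟨c, hc, hcS⟩ := exists_unitary_conj_of_eigVec_eq (hX.add hY) (hherm S)
      (by rw [hhat, hS', h3])
    obtain ⟨u, hu, k, hk, hkJ, h⟩ := exists_conj_sub_conj_eq (signMat_mul_self p q) hJs hX
      (hherm S) (by rw [Matrix.mul_smul, Matrix.smul_mul, signMat_mul_hatM_mul_signMat, smul_neg])
      hc (mul_mem hc hb) (by
        rw [hcS, conjTranspose_mul]
        simp only [Matrix.mul_add, Matrix.add_mul, Matrix.mul_neg, Matrix.neg_mul, Matrix.mul_assoc,
          sub_eq_add_neg])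
    have hX' : (u * X * uᴴ).IsHermitian := isHermitian_mul_mul_conjTranspose u hX
    rw [sub_signMat_mul_mul_signMat hX'] at h
    have hs2 := eigVec_unitary_conj (hherm S) (hherm _) hk h
    rw [hhat, hhat, hS'] at hs2
    refine ⟨u * X * uᴴ, hX', ?_, fun i => ?_⟩
    · rw [eigVec_unitary_conj hX hX' hu rfl]
      exact h1
    · have := congrFun hs2 (Fin.castLE (by omega) i)
      simpa [hatPQ] using this.symm
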